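/- arXiv:1509.05905 — 2 statements merged into one kernel-verified Lean document; each statement's English description precedes it below -/
import Mathlib

section
/- Let U ⊆ ℝ² be a nonempty connected open set and let f : U → ℝ be a function such that for every irreducible polynomial P ∈ ℝ[x,y] and every smooth algebraic arc A of the plane curve P = 0 with A ⊆ U, the restriction f|_A is regular. Then there exist real polynomials p, q ∈ ℝ[x,y], with q not the zero polynomial, such that f(x) = p(x)/q(x) for every x ∈ U with q(x) ≠ 0. (Theorem 2.4 for domains in the plane, stated without the codimension-two claim on the polar set.) -/
open MvPolynomial

/-- The real zero set of a polynomial in two variables. -/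
def realZeroSet (P : MvPolynomial (Fin 2) ℝ) : Set (Fin 2 → ℝ) :=
  {v | eval v P = 0}

/-- `A` is a smooth algebraic arc of the plane curve `P = 0`: it consists of smooth real
points of the curve, is open in the subspace topology of the real zero set of `P`, and
is homeomorphic to `ℝ`. -/
def IsSmoothAlgebraicArc (P : MvPolynomial (Fin 2) ℝ) (A : Set (Fin 2 → ℝ)) : Prop :=
  (∀ v ∈ A, eval v P = 0 ∧
    (eval v (pderiv 0 P) ≠ 0 ∨ eval v (pderiv 1 P) ≠ 0)) ∧
  (∃ O : Set (Fin 2 → ℝ), IsOpen O ∧ A = O ∩ realZeroSet P) ∧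
  Nonempty (A ≃ₜ ℝ)

/-!
Only the open segments in `U` are needed. On a segment a regular function of one variable is a
single fraction without poles, so an identity `f * q = p` with polynomials `p`, `q` propagates from
an infinite subset of the segment to all of it; hence in a connected open set it propagates from a
neighbourhood of one point to the whole set. Such an identity holds near every point of `U`: on
a box `f` is rational on every horizontal and every vertical section, uncountably many sections
have a common degree bound `d`, and a fraction of degree `d` in one variable interpolating `f` along
`2 * d + 1` sections in the other direction must then equal `f`.
-/

section Univariate

open Polynomial

variable {K : Type*} [Field K] {h : K → K} {I S : Set K}

/-- The function `h` is given on `I` by a single fraction `p / q` of polynomials without poles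
in `I`. The identity `h = p / q` is recorded with denominators cleared. -/
def IsFractionOn (h : K → K) (I : Set K) : Prop :=
  ∃ p q : K[X], ∀ t ∈ I, q.eval t ≠ 0 ∧ h t * q.eval t = p.eval t

theorem setOf_mem_and_eval_ne_zero_infinite {r : K[X]} (hr : r ≠ 0) (hI : I.Infinite) :
    {t ∈ I | r.eval t ≠ 0}.Infinite :=
  hI.sdiff (finite_setOfPred_isRoot hr)

theorem mul_eq_mul_of_infinite_eval_div_eq {p q u w : K[X]} (hq : q ≠ 0) (hw : w ≠ 0)
    (hI : I.Infinite) (hpq : ∀ t ∈ I, q.eval t ≠ 0 → h t = p.eval t / q.eval t)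
    (huw : ∀ t ∈ I, w.eval t ≠ 0 → h t = u.eval t / w.eval t) : p * w = u * q := by
  refine eq_of_infinite_eval_eq _ _
    ((setOf_mem_and_eval_ne_zero_infinite (mul_ne_zero hq hw) hI).mono ?_)
  rintro t ⟨ht, hqw⟩
  obtain ⟨hqt, hwt⟩ := mul_ne_zero_iff.mp (by simpa only [Polynomial.eval_mul] using hqw)
  have hfrac : p.eval t / q.eval t = u.eval t / w.eval t := by rw [← hpq t ht hqt, huw t ht hwt]
  simpa only [Set.mem_ofPred_eq, Polynomial.eval_mul] using (div_eq_div_iff hqt hwt).mp hfrac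

/-- All local fractions define one element of `K(X)`, whose reduced form has no poles in `I`. -/
theorem isFractionOn_of_forall_exists_local (hI : I.Infinite)
    (hloc : ∀ a ∈ I, ∃ p q : K[X], q.eval a ≠ 0 ∧
      ∀ t ∈ I, q.eval t ≠ 0 → h t = p.eval t / q.eval t) : IsFractionOn h I := by
  have ne_zero_of_eval {q : K[X]} {a : K} (hqa : q.eval a ≠ 0) : q ≠ 0 := by
    rintro rfl
    exact hqa eval_zero
  obtain ⟨a, ha⟩ := hI.nonempty
  obtain ⟨p, q, hqa, hpq⟩ := hloc a ha
  have hq := ne_zero_of_eval hqa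
  let x : RatFunc K := algebraMap _ _ p / algebraMap _ _ q
  have num_mul_q : x.num * q = p * x.denom := (RatFunc.num_mul_eq_mul_denom_iff hq).mpr rfl
  refine ⟨x.num, x.denom, fun t ht => ?_⟩
  obtain ⟨u, w, hwt, huw⟩ := hloc t ht
  have num_mul_w : x.num * w = u * x.denom := by
    apply mul_right_cancel₀ hq
    linear_combination w * num_mul_q +
      x.denom * mul_eq_mul_of_infinite_eval_div_eq hq (ne_zero_of_eval hwt) hI hpq huw
  have eval_eq : x.num.eval t * w.eval t = u.eval t * x.denom.eval t := by
    simpa only [Polynomial.eval_mul] using congrArg (eval t) num_mul_w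
  constructor
  · intro hdenom
    have hnum : x.num.eval t = 0 := by simpa [hdenom, hwt] using eval_eq
    obtain ⟨α, β, hαβ⟩ := x.isCoprime_num_denom
    simpa [hnum, hdenom] using congrArg (eval t) hαβ
  · rw [huw t ht hwt, div_mul_eq_mul_div, ← eval_eq, mul_div_cancel_right₀ _ hwt]

theorem mul_eval_eq_of_mul_eq_mul {p q P Q : K[X]} {a t : K} (hcross : p * Q = P * q)
    (hq : q.eval t ≠ 0) (hp : a * q.eval t = p.eval t) : a * Q.eval t = P.eval t := by
  have hcross_eval := congrArg (Polynomial.eval t) hcross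
  simp only [Polynomial.eval_mul] at hcross_eval
  apply mul_right_cancel₀ hq
  linear_combination hcross_eval + Q.eval t * hp

theorem IsFractionOn.mul_eval_eq_of_infinite (hh : IsFractionOn h I) {P Q : K[X]}
    (hS : S.Infinite) (hSI : S ⊆ I) (hPQ : ∀ t ∈ S, h t * Q.eval t = P.eval t) :
    ∀ t ∈ I, h t * Q.eval t = P.eval t := by
  obtain ⟨p, q, hpq⟩ := hh
  have cross : p * Q = P * q := by
    refine eq_of_infinite_eval_eq _ _ (hS.mono fun t ht => ?_)
    simp only [Set.mem_ofPred_eq, Polynomial.eval_mul]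
    linear_combination q.eval t * hPQ t ht - Q.eval t * (hpq t (hSI ht)).2
  exact fun t ht => mul_eval_eq_of_mul_eq_mul cross (hpq t ht).1 (hpq t ht).2

theorem mul_eval_eq_of_natDegree_le {p q P Q : K[X]} {d : ℕ} {T : Finset K}
    (hpq : ∀ t ∈ I, q.eval t ≠ 0 ∧ h t * q.eval t = p.eval t)
    (hp : p.natDegree ≤ d) (hq : q.natDegree ≤ d) (hP : P.natDegree ≤ d) (hQ : Q.natDegree ≤ d)
    (hT : 2 * d < T.card) (hTI : ↑T ⊆ I) (hPQ : ∀ t ∈ T, h t * Q.eval t = P.eval t) :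
    ∀ t ∈ I, h t * Q.eval t = P.eval t := by
  have cross : p * Q = P * q := by
    refine eq_of_natDegree_lt_card_of_eval_eq' _ _ T (fun t ht => ?_) (lt_of_le_of_lt ?_ hT)
    · simp only [Polynomial.eval_mul]
      linear_combination q.eval t * hPQ t ht - Q.eval t * (hpq t (hTI ht)).2
    · rw [two_mul]
      exact max_le (natDegree_mul_le_of_le hp hQ) (natDegree_mul_le_of_le hP hq)
  exact fun t ht => mul_eval_eq_of_mul_eq_mul cross (hpq t ht).1 (hpq t ht).2

end Univariate

section SeparatelyRational

open Polynomial

theorem exists_ne_zero_eval_mul_eq_eval_mul {R ι : Type*} [CommRing R] [Nontrivial R] [Fintype ι]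
    (x p q : ι → R) {m n : ℕ} (hcard : Fintype.card ι < m + n) :
    ∃ P ∈ degreeLT R m, ∃ Q ∈ degreeLT R n, (P ≠ 0 ∨ Q ≠ 0) ∧
      ∀ i, Q.eval (x i) * p i = P.eval (x i) * q i := by
  let residual : degreeLT R m × degreeLT R n →ₗ[R] ι → R := LinearMap.pi fun i =>
    (p i • leval (x i) ∘ₗ (degreeLT R n).subtype) ∘ₗ LinearMap.snd R _ _ -
      (q i • leval (x i) ∘ₗ (degreeLT R m).subtype) ∘ₗ LinearMap.fst R _ _
  have not_injective : ¬ Function.Injective residual := fun hinj =>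
    hcard.not_ge (by simpa [Module.finrank_eq_card_basis (degreeLT.basis R _)] using
      LinearMap.finrank_le_finrank_of_injective hinj)
  rw [injective_iff_map_eq_zero] at not_injective
  push Not at not_injective
  obtain ⟨⟨⟨P, hP⟩, ⟨Q, hQ⟩⟩, hPQ, hne⟩ := not_injective
  refine ⟨P, hP, Q, hQ, ?_, fun i => ?_⟩
  · by_contra! hzero
    exact hne (by simp [hzero.1, hzero.2])
  · have residual_eq : p i * Q.eval (x i) - q i * P.eval (x i) = 0 := by
      simpa [residual] using congrFun hPQ i
    linear_combination residual_eq

theorem exists_infinite_setOf_le_of_not_countable {α : Type*} {S : Set α} (hS : ¬ S.Countable)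
    (deg : α → ℕ) : ∃ d, {x ∈ S | deg x ≤ d}.Infinite := by
  by_contra! hfin
  refine hS ((Set.countable_iUnion fun d => (hfin d).countable).mono fun x hx => ?_)
  exact Set.mem_iUnion.mpr ⟨deg x, hx, le_rfl⟩

theorem eval_equivMvPolynomial {R : Type*} [CommRing R] (P : R[X][X]) (v : Fin 2 → R) :
    MvPolynomial.eval v (Bivariate.equivMvPolynomial R P) = P.evalEval (v 0) (v 1) := by
  have hom_eq : (MvPolynomial.aeval v).comp (Bivariate.equivMvPolynomial R : _ →ₐ[R] _) =
      aevalAeval (v 0) (v 1) := by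
    ext <;> simp
  rw [← coe_aevalAeval_eq_evalEval, ← hom_eq]
  rfl

variable {K : Type*} [Field K] {I J : Set K}

theorem eq_zero_of_evalEval_eq_zero (hI : I.Infinite) (hJ : J.Infinite) {P : K[X][X]}
    (hP : ∀ x ∈ I, ∀ y ∈ J, P.evalEval x y = 0) : P = 0 := by
  apply (Bivariate.equivMvPolynomial K).injective
  refine MvPolynomial.funext_set ![I, J] (fun i => by fin_cases i <;> assumption) fun v hv => ?_
  rw [eval_equivMvPolynomial, map_zero, map_zero]
  exact hP _ (hv 0 trivial) _ (hv 1 trivial)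

variable {g : K → K → K}

theorem exists_natDegree_le_mul_evalEval_eq {T : Finset K} {d : ℕ} (hT : T.card ≤ 2 * d + 1)
    (hrow : ∀ y ∈ T, IsFractionOn (g · y) I) :
    ∃ P Q : K[X][X], P.natDegree ≤ d ∧ Q.natDegree ≤ d ∧ (P ≠ 0 ∨ Q ≠ 0) ∧
      ∀ x ∈ I, ∀ y ∈ T, g x y * Q.evalEval x y = P.evalEval x y := by
  choose! p q hpq using hrow
  obtain ⟨P, hP, Q, hQ, hne, hinterp⟩ :=
    exists_ne_zero_eval_mul_eq_eval_mul (R := K[X]) (m := d + 1) (n := d + 1)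
      (fun y : T => C y.1) (fun y => p y) (fun y => q y) (by rw [Fintype.card_coe]; lia)
  have natDegree_le {F : K[X][X]} (hF : F ∈ degreeLT K[X] (d + 1)) : F.natDegree ≤ d :=
    natDegree_le_of_degree_le (mem_degreeLE.mp (degreeLT_succ_eq_degreeLE (R := K[X]) ▸ hF))
  refine ⟨P, Q, natDegree_le hP, natDegree_le hQ, hne, fun x hx y hy => ?_⟩
  obtain ⟨hq, hp⟩ := hpq y hy x hx
  have interp_eval : Q.evalEval x y * (p y).eval x = P.evalEval x y * (q y).eval x := by
    simpa only [Polynomial.eval_mul] using congrArg (Polynomial.eval x) (hinterp ⟨y, hy⟩)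
  apply mul_right_cancel₀ hq
  linear_combination interp_eval + Q.evalEval x y * hp

theorem exists_mul_evalEval_eq_of_isFractionOn (hI : ¬ I.Countable) (hJ : J.Infinite)
    (hrow : ∀ y ∈ J, IsFractionOn (g · y) I) (hcol : ∀ x ∈ I, IsFractionOn (g x) J) :
    ∃ P Q : K[X][X], Q ≠ 0 ∧
      ∀ x ∈ I, ∀ y ∈ J, g x y * Q.evalEval x y = P.evalEval x y := by
  choose! p q hpq using hcol
  obtain ⟨d, hS⟩ := exists_infinite_setOf_le_of_not_countable hI
    fun x => max (p x).natDegree (q x).natDegree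
  obtain ⟨T, hTJ, hT⟩ := hJ.exists_subset_card_eq (2 * d + 1)
  obtain ⟨P, Q, hP, hQ, hne, hPQ_T⟩ :=
    exists_natDegree_le_mul_evalEval_eq hT.le fun y hy => hrow y (hTJ hy)
  have hPQ_S : ∀ x ∈ {x ∈ I | max (p x).natDegree (q x).natDegree ≤ d}, ∀ y ∈ J,
      g x y * Q.evalEval x y = P.evalEval x y := by
    rintro x ⟨hx, hdeg⟩
    simp only [← map_evalRingHom_eval] at hPQ_T ⊢
    exact mul_eval_eq_of_natDegree_le (hpq x hx) (le_of_max_le_left hdeg)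
      (le_of_max_le_right hdeg) (natDegree_map_le.trans hP) (natDegree_map_le.trans hQ)
      (by lia) hTJ (hPQ_T x hx)
  have hPQ : ∀ x ∈ I, ∀ y ∈ J, g x y * Q.evalEval x y = P.evalEval x y := by
    intro x hx y hy
    have hPQ_row : ∀ x ∈ I, g x y * (Q.eval (Polynomial.C y)).eval x =
        (P.eval (Polynomial.C y)).eval x :=
      (hrow y hy).mul_eval_eq_of_infinite hS (Set.sep_subset _ _) fun x hx => hPQ_S x hx y hy
    exact hPQ_row x hx
  refine ⟨P, Q, ?_, hPQ⟩
  rintro rfl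
  have hI_infinite : I.Infinite := fun hfin => hI hfin.countable
  have hP0 : P = 0 := eq_zero_of_evalEval_eq_zero hI_infinite hJ fun x hx y hy => by
    simpa using (hPQ x hx y hy).symm
  simp [hP0] at hne

theorem exists_mul_eval_eq_of_isFractionOn {f : (Fin 2 → K) → K} (hI : ¬ I.Countable)
    (hJ : J.Infinite) (hrow : ∀ y ∈ J, IsFractionOn (fun x => f ![x, y]) I)
    (hcol : ∀ x ∈ I, IsFractionOn (fun y => f ![x, y]) J) :
    ∃ P Q : MvPolynomial (Fin 2) K, Q ≠ 0 ∧
      ∀ v, v 0 ∈ I → v 1 ∈ J → f v * eval v Q = eval v P := by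
  obtain ⟨P, Q, hQ, hPQ⟩ :=
    exists_mul_evalEval_eq_of_isFractionOn (g := fun x y => f ![x, y]) hI hJ hrow hcol
  refine ⟨Bivariate.equivMvPolynomial K P, Bivariate.equivMvPolynomial K Q, by simpa using hQ,
    fun v hv0 hv1 => ?_⟩
  have hv : ![v 0, v 1] = v := FinVec.etaExpand_eq v
  simpa only [eval_equivMvPolynomial, hv] using hPQ _ hv0 _ hv1

end SeparatelyRational

section Lines

variable {σ R K : Type*} [CommRing R] [Field K]

/-- The restriction of a polynomial to the line through `a` and `b`, as a polynomial in the
parameter `t` of `AffineMap.lineMap a b`. -/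
noncomputable def lineRestriction (a b : σ → R) : MvPolynomial σ R →ₐ[R] Polynomial R :=
  aeval fun i => Polynomial.X * Polynomial.C (b i - a i) + Polynomial.C (a i)

theorem eval_lineRestriction (a b : σ → R) (P : MvPolynomial σ R) (t : R) :
    (lineRestriction a b P).eval t = eval (AffineMap.lineMap a b t) P := by
  have hom_eq : (Polynomial.aeval t).comp (lineRestriction a b) =
      aeval (AffineMap.lineMap a b t) := by
    ext i
    simp [lineRestriction, AffineMap.lineMap_apply]
  simpa using DFunLike.congr_fun hom_eq P

/-- The restriction of `f` to `A` is regular: near every point of `A` it is a quotient of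
polynomials, where the neighbourhood of `a` in `A` is the complement of the zeros of a denominator
that does not vanish at `a`. -/
def IsRegularOn (f : (σ → K) → K) (A : Set (σ → K)) : Prop :=
  ∀ a ∈ A, ∃ p q : MvPolynomial σ K, eval a q ≠ 0 ∧
    ∀ z ∈ A, eval z q ≠ 0 → f z = eval z p / eval z q

theorem isRegularOn_singleton (f : (σ → K) → K) (a : σ → K) : IsRegularOn f {a} := by
  rintro z rfl
  exact ⟨C (f z), 1, by simp⟩

theorem IsRegularOn.isFractionOn_comp_lineMap {f : (σ → K) → K} {a b : σ → K} {I : Set K}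
    (hf : IsRegularOn f (AffineMap.lineMap a b '' I)) (hI : I.Infinite) :
    IsFractionOn (fun t => f (AffineMap.lineMap a b t)) I := by
  refine isFractionOn_of_forall_exists_local hI fun t ht => ?_
  obtain ⟨p, q, hqt, hpq⟩ := hf _ ⟨t, ht, rfl⟩
  refine ⟨lineRestriction a b p, lineRestriction a b q, ?_⟩
  simp only [eval_lineRestriction]
  exact ⟨hqt, fun s hs => hpq _ ⟨s, hs, rfl⟩⟩

end Lines

section Segments

open Topology

variable {σ : Type*} {f : (σ → ℝ) → ℝ} {U V : Set (σ → ℝ)}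

/-- The restriction of `f` to every open segment contained in `U` is regular. -/
def IsRegularOnOpenSegments (f : (σ → ℝ) → ℝ) (U : Set (σ → ℝ)) : Prop :=
  ∀ a b, openSegment ℝ a b ⊆ U → IsRegularOn f (openSegment ℝ a b)

theorem IsRegularOnOpenSegments.mono (hf : IsRegularOnOpenSegments f U) (hVU : V ⊆ U) :
    IsRegularOnOpenSegments f V :=
  fun a b hab => hf a b (hab.trans hVU)

theorem IsRegularOnOpenSegments.isFractionOn_Ioo (hf : IsRegularOnOpenSegments f U)
    {a b : σ → ℝ} {l u : ℝ} (hlu : l < u)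
    (hU : Set.MapsTo (AffineMap.lineMap a b) (Set.Ioo l u) U) :
    IsFractionOn (fun t => f (AffineMap.lineMap a b t)) (Set.Ioo l u) := by
  have image_eq : AffineMap.lineMap a b '' Set.Ioo l u =
      openSegment ℝ (AffineMap.lineMap a b l) (AffineMap.lineMap a b u) := by
    rw [← openSegment_eq_Ioo hlu, image_openSegment]
  refine IsRegularOn.isFractionOn_comp_lineMap ?_ (Set.Ioo_infinite hlu)
  rw [image_eq]
  exact hf _ _ (image_eq ▸ hU.image_subset)

theorem exists_Ioo_mapsTo_lineMap {E : Type*} [AddCommGroup E] [Module ℝ E] [TopologicalSpace E]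
    [IsTopologicalAddGroup E] [ContinuousSMul ℝ E] {V : Set E} (hV : IsOpen V)
    (hconv : Convex ℝ V) {x y : E} (hx : x ∈ V) (hy : y ∈ V) :
    ∃ l < (0 : ℝ), ∃ u > (1 : ℝ), Set.MapsTo (AffineMap.lineMap x y) (Set.Ioo l u) V := by
  have preimage_open : IsOpen (AffineMap.lineMap x y ⁻¹' V : Set ℝ) :=
    hV.preimage AffineMap.lineMap_continuous
  obtain ⟨l, u', ⟨hl, hu'⟩, hlu'⟩ :=
    mem_nhds_iff_exists_Ioo_subset.mp (preimage_open.mem_nhds (by simpa : (0 : ℝ) ∈ _))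
  obtain ⟨l', u, ⟨hl', hu⟩, hlu⟩ :=
    mem_nhds_iff_exists_Ioo_subset.mp (preimage_open.mem_nhds (by simpa : (1 : ℝ) ∈ _))
  refine ⟨l, hl, u, hu, fun t ht => ?_⟩
  rcases lt_or_ge t 0 with ht0 | ht0
  · exact hlu' ⟨ht.1, ht0.trans hu'⟩
  rcases lt_or_ge 1 t with ht1 | ht1
  · exact hlu ⟨hl'.trans ht1, ht.2⟩
  · exact hconv.lineMap_mem hx hy ⟨ht0, ht1⟩

theorem IsRegularOnOpenSegments.mul_eval_eq_of_convex (hf : IsRegularOnOpenSegments f V)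
    (hV : IsOpen V) (hconv : Convex ℝ V) {P Q : MvPolynomial σ ℝ} {y : σ → ℝ} (hy : y ∈ V)
    (hPQ : ∀ᶠ z in 𝓝 y, f z * eval z Q = eval z P) :
    ∀ x ∈ V, f x * eval x Q = eval x P := by
  intro x hx
  obtain ⟨l, hl, u, hu, hluV⟩ := exists_Ioo_mapsTo_lineMap hV hconv hy hx
  have hPQ_line : ∀ᶠ t in 𝓝 (0 : ℝ), f (AffineMap.lineMap y x t) *
      eval (AffineMap.lineMap y x t) Q = eval (AffineMap.lineMap y x t) P := by
    have hcont : Continuous (AffineMap.lineMap y x : ℝ → σ → ℝ) := AffineMap.lineMap_continuous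
    exact (hcont.tendsto' 0 y (AffineMap.lineMap_apply_zero y x)).eventually hPQ
  have hinf := infinite_of_mem_nhds (0 : ℝ)
    (Filter.inter_mem (Ioo_mem_nhds hl (one_pos.trans hu)) hPQ_line)
  have hPQ_Ioo := (hf.isFractionOn_Ioo (by linarith) hluV).mul_eval_eq_of_infinite
    (P := lineRestriction y x P) (Q := lineRestriction y x Q) hinf Set.inter_subset_left
    fun t ht => by
      simpa only [eval_lineRestriction, Set.mem_ofPred_eq] using ht.2
  simpa [eval_lineRestriction] using hPQ_Ioo 1 ⟨hl.trans one_pos, hu⟩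

theorem IsRegularOnOpenSegments.mul_eval_eq_of_isPreconnected
    (hf : IsRegularOnOpenSegments f U) (hU : IsOpen U) (hconn : IsPreconnected U)
    {P Q : MvPolynomial σ ℝ} {y : σ → ℝ} (hy : y ∈ U)
    (hPQ : ∀ᶠ z in 𝓝 y, f z * eval z Q = eval z P) :
    ∀ x ∈ U, f x * eval x Q = eval x P := by
  let E : Set (σ → ℝ) := {x | f x * eval x Q = eval x P}
  suffices hUE : U ⊆ interior E from hUE.trans interior_subset
  refine hconn.subset_of_closure_inter_subset isOpen_interior
    ⟨y, hy, mem_interior_iff_mem_nhds.mpr hPQ⟩ ?_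
  rintro x ⟨hx, hxU⟩
  obtain ⟨W, ⟨hW, hconv⟩, hWU⟩ :=
    (LocallyConvexSpace.convex_basis (𝕜 := ℝ) x).mem_iff.mp (hU.mem_nhds hxU)
  have hxW : x ∈ interior W := mem_interior_iff_mem_nhds.mpr hW
  obtain ⟨z, hzW, hzE⟩ := mem_closure_iff.mp hx _ isOpen_interior hxW
  have hPQ_W := (hf.mono (interior_subset.trans hWU)).mul_eval_eq_of_convex isOpen_interior
    hconv.interior hzW (mem_interior_iff_mem_nhds.mp hzE)
  exact mem_interior.mpr ⟨_, hPQ_W, isOpen_interior, hxW⟩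

end Segments

section Plane

open Topology

variable {U : Set (Fin 2 → ℝ)} {f : (Fin 2 → ℝ) → ℝ}

theorem not_countable_Ioo {a b : ℝ} (hab : a < b) : ¬ (Set.Ioo a b).Countable := by
  rw [← Cardinal.le_aleph0_iff_set_countable, Cardinal.mk_Ioo_real hab, not_le]
  exact Cardinal.aleph0_lt_continuum

theorem IsRegularOnOpenSegments.exists_eventually_mul_eval_eq (hf : IsRegularOnOpenSegments f U)
    {c : Fin 2 → ℝ} (hU : U ∈ 𝓝 c) :
    ∃ P Q : MvPolynomial (Fin 2) ℝ, Q ≠ 0 ∧ ∀ᶠ x in 𝓝 c, f x * eval x Q = eval x P := by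
  obtain ⟨r, hr, hball⟩ := Metric.mem_nhds_iff.mp hU
  let I (i : Fin 2) : Set ℝ := Set.Ioo (c i - r) (c i + r)
  have mem_ball {v : Fin 2 → ℝ} : v ∈ Metric.ball c r ↔ v 0 ∈ I 0 ∧ v 1 ∈ I 1 := by
    simp [ball_pi c hr, Real.ball_eq_Ioo, Set.mem_pi, Fin.forall_fin_two, I]
  have lt_end (i : Fin 2) : c i - r < c i + r := by linarith
  have row (x y : ℝ) : AffineMap.lineMap ![0, y] ![1, y] x = ![x, y] := by
    ext i
    fin_cases i <;> simp [AffineMap.lineMap_apply]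
  have col (x y : ℝ) : AffineMap.lineMap ![x, 0] ![x, 1] y = ![x, y] := by
    ext i
    fin_cases i <;> simp [AffineMap.lineMap_apply]
  obtain ⟨P, Q, hQ, hPQ⟩ := exists_mul_eval_eq_of_isFractionOn (f := f)
    (not_countable_Ioo (lt_end 0)) (Set.Ioo_infinite (lt_end 1))
    (fun y hy => by
      simpa only [row] using hf.isFractionOn_Ioo (a := ![0, y]) (b := ![1, y]) (lt_end 0)
        fun x hx => hball (by rw [row]; exact mem_ball.mpr ⟨hx, hy⟩))
    (fun x hx => by
      simpa only [col] using hf.isFractionOn_Ioo (a := ![x, 0]) (b := ![x, 1]) (lt_end 1)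
        fun y hy => hball (by rw [col]; exact mem_ball.mpr ⟨hx, hy⟩))
  refine ⟨P, Q, hQ, ?_⟩
  filter_upwards [Metric.ball_mem_nhds c hr] with x hx
  exact hPQ x (mem_ball.mp hx).1 (mem_ball.mp hx).2

end Plane

section LinesAreArcs

theorem irreducible_of_totalDegree_eq_one_of_field {σ K : Type*} [Field K] {p : MvPolynomial σ K}
    (hp : p.totalDegree = 1) : Irreducible p := by
  refine irreducible_of_totalDegree_eq_one hp fun x hx => isUnit_iff_ne_zero.mpr ?_
  rintro rfl
  have hp0 : p = 0 := by
    ext i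
    simpa using hx i
  simp [hp0] at hp

section LinePolynomial

variable {R K : Type*} [CommRing R] [Field K]

/-- A linear equation of the line through the distinct points `a` and `b` of the plane. -/
noncomputable def linePolynomial (a b : Fin 2 → R) : MvPolynomial (Fin 2) R :=
  C (b 1 - a 1) * (X 0 - C (a 0)) - C (b 0 - a 0) * (X 1 - C (a 1))

theorem eval_linePolynomial (a b v : Fin 2 → R) :
    eval v (linePolynomial a b) = (b 1 - a 1) * (v 0 - a 0) - (b 0 - a 0) * (v 1 - a 1) := by
  simp [linePolynomial]

theorem eval_pderiv_linePolynomial_ne_zero {a b : Fin 2 → R} (hab : a ≠ b) (v : Fin 2 → R) :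
    eval v (pderiv 0 (linePolynomial a b)) ≠ 0 ∨ eval v (pderiv 1 (linePolynomial a b)) ≠ 0 := by
  by_contra! hzero
  obtain ⟨h1, h0⟩ : b 1 = a 1 ∧ a 0 = b 0 := by
    simpa [linePolynomial, pderiv_X, sub_eq_zero] using hzero
  exact hab (by ext i; fin_cases i <;> simp [h0, h1])

theorem totalDegree_linePolynomial {a b : Fin 2 → K} (hab : a ≠ b) :
    (linePolynomial a b).totalDegree = 1 := by
  apply le_antisymm
  · have totalDegree_le (c e : K) (i : Fin 2) :
        (C c * (X i - C e) : MvPolynomial (Fin 2) K).totalDegree ≤ 1 := by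
      refine (totalDegree_mul _ _).trans ?_
      rw [totalDegree_C, zero_add]
      exact (totalDegree_sub_C_le _ _).trans (totalDegree_X _).le
    exact (totalDegree_sub _ _).trans (max_le (totalDegree_le _ _ _) (totalDegree_le _ _ _))
  · by_contra! hlt
    have hconst := totalDegree_eq_zero_iff_eq_C.mp (Nat.lt_one_iff.mp hlt)
    have hpderiv := eval_pderiv_linePolynomial_ne_zero hab 0
    rw [hconst] at hpderiv
    simp at hpderiv

theorem range_lineMap_eq_setOf_eval_linePolynomial_eq_zero {a b : Fin 2 → K} (hab : a ≠ b) :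
    Set.range (AffineMap.lineMap a b : K → Fin 2 → K) = {v | eval v (linePolynomial a b) = 0} := by
  ext v
  rw [Set.mem_ofPred_eq, eval_linePolynomial]
  constructor
  · rintro ⟨t, rfl⟩
    simp only [AffineMap.lineMap_apply, vsub_eq_sub, vadd_eq_add, Pi.add_apply, Pi.smul_apply,
      Pi.sub_apply, smul_eq_mul]
    ring
  · intro hv
    have hcross : ∀ i j, (v i - a i) * (b j - a j) = (v j - a j) * (b i - a i) := by
      simp only [Fin.forall_fin_two, true_and, and_true]
      exact ⟨by linear_combination hv, by linear_combination -hv⟩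
    obtain ⟨i, hi⟩ := Function.ne_iff.mp hab
    have hi' : b i - a i ≠ 0 := sub_ne_zero.mpr hi.symm
    refine ⟨(v i - a i) / (b i - a i), ?_⟩
    ext j
    rw [AffineMap.lineMap_apply, vsub_eq_sub, vadd_eq_add, Pi.add_apply, Pi.smul_apply,
      Pi.sub_apply, smul_eq_mul, ← eq_sub_iff_add_eq, div_mul_eq_mul_div, div_eq_iff hi']
    exact hcross i j

end LinePolynomial

open Topology

theorem isEmbedding_lineMap {𝕜 E : Type*} [NontriviallyNormedField 𝕜] [CompleteSpace 𝕜]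
    [AddCommGroup E] [Module 𝕜 E] [TopologicalSpace E] [IsTopologicalAddGroup E]
    [ContinuousSMul 𝕜 E] [T2Space E] {a b : E} (hab : a ≠ b) :
    IsEmbedding (AffineMap.lineMap a b : 𝕜 → E) := by
  have lineMap_eq : (AffineMap.lineMap a b : 𝕜 → E) = Homeomorph.addRight a ∘ (· • (b - a)) := by
    ext t
    simp [AffineMap.lineMap_apply]
  rw [lineMap_eq]
  exact (Homeomorph.addRight a).isEmbedding.comp
    (isClosedEmbedding_smul_left (sub_ne_zero.mpr hab.symm)).isEmbedding

theorem nonempty_ball_homeomorph {E : Type*} [SeminormedAddCommGroup E] [NormedSpace ℝ E] (c : E)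
    {r : ℝ} (hr : 0 < r) : Nonempty (Metric.ball c r ≃ₜ E) :=
  ⟨(Homeomorph.setCongr (OpenPartialHomeomorph.univBall_target c hr)).symm.trans
    ((OpenPartialHomeomorph.univBall c r).toHomeomorphSourceTarget.symm.trans
      ((Homeomorph.setCongr (OpenPartialHomeomorph.univBall_source c r)).trans
        (Homeomorph.Set.univ E)))⟩

theorem isSmoothAlgebraicArc_openSegment {a b : Fin 2 → ℝ} (hab : a ≠ b) :
    IsSmoothAlgebraicArc (linePolynomial a b) (openSegment ℝ a b) := by
  have embedding := isEmbedding_lineMap (𝕜 := ℝ) hab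
  have zeroSet : realZeroSet (linePolynomial a b) = Set.range (AffineMap.lineMap a b : ℝ → _) :=
    (range_lineMap_eq_setOf_eval_linePolynomial_eq_zero hab).symm
  rw [openSegment_eq_image_lineMap]
  refine ⟨?_, ?_, ?_⟩
  · rintro _ ⟨t, -, rfl⟩
    have ht : AffineMap.lineMap a b t ∈ realZeroSet (linePolynomial a b) := zeroSet ▸ ⟨t, rfl⟩
    exact ⟨ht, eval_pderiv_linePolynomial_ne_zero hab _⟩
  · obtain ⟨O, hO, hO_preimage⟩ := embedding.isOpen_iff.mp (isOpen_Ioo (a := (0 : ℝ)) (b := 1))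
    exact ⟨O, hO, by rw [← hO_preimage, Set.image_preimage_eq_inter_range, zeroSet]⟩
  · obtain ⟨e⟩ := nonempty_ball_homeomorph (1 / 2 : ℝ) one_half_pos
    have ball_eq : Metric.ball (1 / 2 : ℝ) (1 / 2) = Set.Ioo 0 1 := by norm_num [Real.ball_eq_Ioo]
    exact ⟨(embedding.homeomorphImage _).symm.trans ((Homeomorph.setCongr ball_eq).symm.trans e)⟩

theorem isRegularOnOpenSegments_of_forall_isSmoothAlgebraicArc {U : Set (Fin 2 → ℝ)}
    {f : (Fin 2 → ℝ) → ℝ}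
    (harc : ∀ P : MvPolynomial (Fin 2) ℝ, Irreducible P →
      ∀ A, IsSmoothAlgebraicArc P A → A ⊆ U → IsRegularOn f A) :
    IsRegularOnOpenSegments f U := by
  intro a b hU
  rcases eq_or_ne a b with rfl | hab
  · rw [openSegment_same]
    exact isRegularOn_singleton f a
  · exact harc _ (irreducible_of_totalDegree_eq_one_of_field (totalDegree_linePolynomial hab)) _
      (isSmoothAlgebraicArc_openSegment hab) hU

end LinesAreArcs

theorem rational_of_regular_on_smooth_algebraic_arcs_plane_general {U : Set (Fin 2 → ℝ)}
    (hU : IsOpen U) (hconn : IsConnected U) {f : (Fin 2 → ℝ) → ℝ}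
    (hf : IsRegularOnOpenSegments f U) :
    ∃ p q : MvPolynomial (Fin 2) ℝ, q ≠ 0 ∧ ∀ x ∈ U, f x * eval x q = eval x p := by
  obtain ⟨c, hc⟩ := hconn.nonempty
  obtain ⟨p, q, hq, hpq⟩ := hf.exists_eventually_mul_eval_eq (hU.mem_nhds hc)
  exact ⟨p, q, hq, hf.mul_eval_eq_of_isPreconnected hU hconn.isPreconnected hc hpq⟩

/-- **Theorem 2.4** for domains in the plane (without the codimension-two claim). If
`f : U → ℝ`, defined on a nonempty connected open set `U ⊆ ℝ²`, is regular on every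
smooth algebraic arc contained in `U`, then `f` agrees with a rational function `p/q`
on `{x ∈ U : q(x) ≠ 0}`. -/
theorem rational_of_regular_on_smooth_algebraic_arcs_plane
    (U : Set (Fin 2 → ℝ)) (hU : IsOpen U) (hne : U.Nonempty) (hconn : IsConnected U)
    (f : (Fin 2 → ℝ) → ℝ)
    (harc : ∀ P : MvPolynomial (Fin 2) ℝ, Irreducible P →
      ∀ A : Set (Fin 2 → ℝ), IsSmoothAlgebraicArc P A → A ⊆ U →
        ∀ a ∈ A, ∃ p q : MvPolynomial (Fin 2) ℝ, eval a q ≠ 0 ∧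
          ∀ z ∈ A, eval z q ≠ 0 → f z = eval z p / eval z q) :
    ∃ p q : MvPolynomial (Fin 2) ℝ, q ≠ 0 ∧
      ∀ x ∈ U, eval x q ≠ 0 → f x = eval x p / eval x q := by
  obtain ⟨p, q, hq, hpq⟩ := rational_of_regular_on_smooth_algebraic_arcs_plane_general hU hconn
    (isRegularOnOpenSegments_of_forall_isSmoothAlgebraicArc harc)
  exact ⟨p, q, hq, fun x hx hqx => eq_div_of_mul_eq hqx (hpq x hx)⟩
end

section
/- Let U ⊆ ℝ^n be a nonempty connected open set and let f : U → ℝ be arc-rational. Then f is continuous on U, f is rational (there exist real polynomials p, q in n variables, q not the zero polynomial, with f(x) = p(x)/q(x) for every x ∈ U with q(x) ≠ 0), and moreover for every prime ideal I of ℝ[X₁,…,X_n] with Krull dimension of ℝ[X₁,…,X_n]/I equal to 1 there exist polynomials p', q' with q' ∉ I such that f(x) = p'(x)/q'(x) for every x ∈ U ∩ Z(I) with q'(x) ≠ 0. (Theorem 1.10 for open subsets of ℝ^n.) -/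
open MvPolynomial

/-- The set of real points of the subvariety of affine `n`-space defined by an ideal `I`
of the real polynomial ring. -/
def realPoints {n : ℕ} (I : Ideal (MvPolynomial (Fin n) ℝ)) : Set (Fin n → ℝ) :=
  {x | ∀ P ∈ I, eval x P = 0}

/-- `f : W → ℝ` is arc-rational: for every `x ∈ W` and every irreducible real algebraic
curve through `x` (encoded by a prime ideal `I` with one-dimensional quotient and
`x ∈ Z(I)`), there is an open neighborhood `U_x` of `x` in `W` such that the restriction
of `f` to `U_x ∩ Z(I)` is continuous and rational on the curve. -/
def ArcRational {n : ℕ} (W : Set (Fin n → ℝ)) (f : (Fin n → ℝ) → ℝ) : Prop :=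
  ∀ x ∈ W, ∀ I : Ideal (MvPolynomial (Fin n) ℝ), I.IsPrime →
    ringKrullDim (MvPolynomial (Fin n) ℝ ⧸ I) = 1 → x ∈ realPoints I →
    ∃ Ux : Set (Fin n → ℝ), IsOpen Ux ∧ x ∈ Ux ∧ Ux ⊆ W ∧
      ContinuousOn f (Ux ∩ realPoints I) ∧
      ∃ p q : MvPolynomial (Fin n) ℝ, q ∉ I ∧
        ∀ y ∈ Ux ∩ realPoints I, eval y q ≠ 0 → f y = eval y p / eval y q

/-!
Restricted to a line, an arc-rational function is a quotient of univariate polynomials. Baire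
category bounds their degrees on a Zariski-dense set of parallel lines, and interpolation, one
variable at a time, turns this into a quotient `p / q` of polynomials on a box; connectedness of `U`
makes `q * f = p` global.

Continuity follows from curve selection. If `a` lies in the closure of `{g > 0}` but not in it, take
a prime ideal `I` maximal with `a ∈ closure (Z(I) ∩ {g > 0})`. If `Z(I)` had dimension at least
two, some polynomial `r` comparable with the squared distance to `a` would be algebraically
independent from `g` modulo `I`, hence some vector field tangent to `Z(I)` would kill `r` but not
`g`. Maximizing `g` on the level sets of `r` produces zeros of the derivative of `g` in
`Z(I) ∩ {g > 0}` that accumulate at `a`, against the maximality of `I`. So `Z(I)` is a curve.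
Applied to the polynomial whose positivity expresses `|f - f a| > e`, this yields a curve along
which `f` is discontinuous.
-/

open Filter Topology
open scoped Polynomial

section Lines

variable {σ R S : Type*} [CommRing R] [CommRing S] [Algebra R S]

/-- Restriction of polynomials to the line `t ↦ a + t • v`, as a polynomial in the parameter `t`.
The base point and the direction may lie in an `R`-algebra `S`: with `S = MvPolynomial σ R` and
`a = X` this is the line through the generic point. -/
noncomputable def evalLine (a v : σ → S) : MvPolynomial σ R →ₐ[R] S[X] :=
  aeval fun i => Polynomial.C (a i) + Polynomial.X * Polynomial.C (v i)

theorem eval_evalLine (a v : σ → S) (P : MvPolynomial σ R) (t : S) :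
    (evalLine a v P).eval t = aeval (a + t • v) P := by
  have h : ((Polynomial.aeval t).restrictScalars R).comp (evalLine a v) = aeval (a + t • v) := by
    ext i
    simp only [evalLine, AlgHom.comp_apply, aeval_X, AlgHom.restrictScalars_apply, map_add,
      map_mul, Polynomial.aeval_C, Polynomial.aeval_X, Pi.add_apply, Pi.smul_apply, smul_eq_mul,
      Algebra.algebraMap_self_apply]
  simpa [Polynomial.aeval_def] using DFunLike.congr_fun h P

theorem eval_evalLine_self (a v : σ → R) (P : MvPolynomial σ R) (t : R) :
    (evalLine a v P).eval t = eval (a + t • v) P := by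
  rw [eval_evalLine, aeval_eq_eval]

theorem evalLine_map {T : Type*} [CommRing T] [Algebra R T] (φ : S →ₐ[R] T) (a v : σ → S)
    (P : MvPolynomial σ R) :
    (evalLine a v P).map (φ : S →+* T) = evalLine (φ ∘ a) (φ ∘ v) P := by
  have h : (Polynomial.mapAlgHom φ).comp (evalLine a v) = evalLine (R := R) (φ ∘ a) (φ ∘ v) := by
    ext i
    simp [evalLine]
  simpa using DFunLike.congr_fun h P

theorem evalLine_ne_zero {x y : σ → R} {q : MvPolynomial σ R} (hq : eval y q ≠ 0) :
    evalLine x (y - x) q ≠ 0 := by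
  intro h
  have := eval_evalLine_self x (y - x) q 1
  rw [h, Polynomial.eval_zero, one_smul, add_sub_cancel] at this
  exact hq this.symm

end Lines

section LineContinuity

variable {E : Type*} [AddCommGroup E] [Module ℝ E]

/-- `f` is continuous at `x` along every straight line through `x`. -/
def LineContinuousAt (f : E → ℝ) (x : E) : Prop :=
  ∀ v : E, ContinuousAt (fun t : ℝ => f (x + t • v)) 0

/-- Along every straight line through `x`, the function `f` is continuous at `x` and agrees near
`x` with a rational function of the parameter. The fraction is written with denominators cleared,
so the identity also holds at the zeros of `q`. -/
def LineRationalAt (f : E → ℝ) (x : E) : Prop :=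
  ∀ v : E, ContinuousAt (fun t : ℝ => f (x + t • v)) 0 ∧
    ∃ p q : ℝ[X], q ≠ 0 ∧ ∀ᶠ t in 𝓝 (0 : ℝ), q.eval t * f (x + t • v) = p.eval t

theorem LineRationalAt.lineContinuousAt {f : E → ℝ} {x : E} (hf : LineRationalAt f x) :
    LineContinuousAt f x :=
  fun v => (hf v).1

theorem LineRationalAt.comp {E' : Type*} [AddCommGroup E'] [Module ℝ E'] {f : E → ℝ} {g : E' → E}
    {x : E'} (hf : LineRationalAt f (g x)) (L : E' → E)
    (hg : ∀ (v : E') (t : ℝ), g (x + t • v) = g x + t • L v) :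
    LineRationalAt (fun x => f (g x)) x := by
  intro v
  simpa only [hg] using hf (L v)

theorem LineRationalAt.continuousAt {f : ℝ → ℝ} {x : ℝ} (hf : LineRationalAt f x) :
    ContinuousAt f x := by
  have h := (hf 1).1
  simp only [smul_eq_mul, mul_one] at h
  rw [ContinuousAt, ← map_add_left_nhds_zero, tendsto_map'_iff]
  simpa [ContinuousAt, Function.comp_def] using h

theorem LineRationalAt.eventually_eq_fraction {f : ℝ → ℝ} {x : ℝ} (hf : LineRationalAt f x) :
    ∃ p q : ℝ[X], q ≠ 0 ∧ ∀ᶠ y in 𝓝 x, q.eval y * f y = p.eval y := by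
  obtain ⟨-, p, q, hq, hpq⟩ := hf 1
  refine ⟨p.comp (.X - .C x), q.comp (.X - .C x), ?_, ?_⟩
  · rwa [sub_eq_add_neg, ← Polynomial.C_neg, Polynomial.comp_X_add_C_ne_zero_iff]
  · rw [← map_add_left_nhds_zero, eventually_map]
    simpa using hpq

theorem LineContinuousAt.eval_mul_sub_eval {σ : Type*} {f : (σ → ℝ) → ℝ} {x : σ → ℝ}
    (hf : LineContinuousAt f x) (q p : MvPolynomial σ ℝ) :
    LineContinuousAt (fun y => eval y q * f y - eval y p) x := by
  intro v
  have hcont (P : MvPolynomial σ ℝ) : Continuous fun t : ℝ => eval (x + t • v) P :=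
    P.continuous_eval.comp (by fun_prop)
  exact ((hcont q).continuousAt.mul (hf v)).sub (hcont p).continuousAt

end LineContinuity

section Cancellation

theorem eventually_nhdsNE_polynomial_eval_ne_zero {q : ℝ[X]} (hq : q ≠ 0) (a : ℝ) :
    ∀ᶠ t in 𝓝[≠] a, q.eval t ≠ 0 :=
  nhdsNE_le_cofinite a (Polynomial.finite_setOfPred_isRoot hq).eventually_cofinite_notMem

theorem eq_zero_of_eventually_polynomial_eval_mul_eq_zero {h : ℝ → ℝ} {a : ℝ}
    (hh : ContinuousAt h a) {q : ℝ[X]} (hq : q ≠ 0) (H : ∀ᶠ t in 𝓝 a, q.eval t * h t = 0) :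
    h a = 0 := by
  have hzero : ∀ᶠ t in 𝓝[≠] a, h t = 0 := by
    filter_upwards [H.filter_mono nhdsWithin_le_nhds,
      eventually_nhdsNE_polynomial_eval_ne_zero hq a] with t ht hqt
    exact (mul_eq_zero.1 ht).resolve_left hqt
  exact tendsto_nhds_unique_of_eventuallyEq (hh.mono_left nhdsWithin_le_nhds) tendsto_const_nhds
    hzero

variable {σ : Type*}

theorem exists_eval_ne_zero {q : MvPolynomial σ ℝ} (hq : q ≠ 0) : ∃ y, eval y q ≠ 0 := by
  by_contra! h
  exact hq (MvPolynomial.funext fun y => by rw [h y, map_zero])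

theorem LineContinuousAt.frequently_eval_ne_zero_and_mem {f : (σ → ℝ) → ℝ} {x : σ → ℝ}
    (hf : LineContinuousAt f x) {q : MvPolynomial σ ℝ} (hq : q ≠ 0) {V : Set ℝ}
    (hV : V ∈ 𝓝 (f x)) : ∃ᶠ y in 𝓝 x, eval y q ≠ 0 ∧ f y ∈ V := by
  obtain ⟨y, hy⟩ := exists_eval_ne_zero hq
  have hline : Tendsto (fun t : ℝ => x + t • (y - x)) (𝓝[≠] 0) (𝓝 x) :=
    ((by fun_prop : Continuous fun t : ℝ => x + t • (y - x)).tendsto' 0 x (by simp)).mono_left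
      nhdsWithin_le_nhds
  have hfV : ∀ᶠ t in 𝓝[≠] (0 : ℝ), f (x + t • (y - x)) ∈ V :=
    ((hf (y - x)).eventually (by simpa using hV)).filter_mono nhdsWithin_le_nhds
  refine hline.frequently (Eventually.frequently ?_)
  filter_upwards [hfV, eventually_nhdsNE_polynomial_eval_ne_zero (evalLine_ne_zero hy) 0]
    with t hft hqt
  exact ⟨by rwa [← eval_evalLine_self], hft⟩

theorem LineContinuousAt.eq_zero_of_eventually_eval_mul_eq_zero {h : (σ → ℝ) → ℝ} {x : σ → ℝ}
    (hh : LineContinuousAt h x) {q : MvPolynomial σ ℝ} (hq : q ≠ 0)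
    (H : ∀ᶠ y in 𝓝 x, eval y q * h y = 0) : h x = 0 := by
  by_contra hx
  obtain ⟨y, ⟨hqy, hhy⟩, hy⟩ :=
    ((hh.frequently_eval_ne_zero_and_mem hq (isOpen_ne.mem_nhds hx)).and_eventually H).exists
  exact mul_ne_zero hqy hhy hy

theorem eq_zero_of_eventually_eval_eq_zero {x : σ → ℝ} {q : MvPolynomial σ ℝ}
    (H : ∀ᶠ y in 𝓝 x, eval y q = 0) : q = 0 := by
  by_contra hq
  have hone : LineContinuousAt (fun _ : σ → ℝ => (1 : ℝ)) x := fun _ => continuousAt_const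
  exact one_ne_zero (hone.eq_zero_of_eventually_eval_mul_eq_zero hq (by simpa using H))

end Cancellation

section Gluing

theorem exists_fraction_of_eventually_eq_fraction {X A K : Type*} [TopologicalSpace X] [CommRing A]
    [IsDomain A] [CommRing K] [Nontrivial K] (ev : X → A →+* K) {s : Set X}
    (hs : IsPreconnected s) (hne : s.Nonempty) {f : X → K}
    (hcancel : ∀ x ∈ s, ∀ q p₀ q₀ : A, q ≠ 0 →
      (∀ᶠ y in 𝓝 x, ev y q * (ev y q₀ * f y - ev y p₀) = 0) → ev x q₀ * f x - ev x p₀ = 0)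
    (hloc : ∀ x ∈ s, ∃ p q : A, q ≠ 0 ∧ ∀ᶠ y in 𝓝 x, ev y q * f y = ev y p) :
    ∃ p q : A, q ≠ 0 ∧ ∀ x ∈ s, ev x q * f x = ev x p := by
  have hzero : ∀ x ∈ s, ∀ a : A, (∀ᶠ y in 𝓝 x, ev y a = 0) → a = 0 := by
    intro x hx a ha
    by_contra hne
    simpa using hcancel x hx a 1 0 hne (ha.mono fun y hy => by rw [hy, zero_mul])
  choose! p q hq hpq using hloc
  have hsame : ∀ x ∈ s, ∀ y ∈ s, p x * q y = p y * q x := by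
    intro x hx y hy
    refine hs.induction₂ (fun x y => p x * q y = p y * q x) ?_ ?_ (fun _ _ _ _ => Eq.symm) hx hy
    · intro x hx
      filter_upwards [(hpq x hx).eventually_nhds.filter_mono nhdsWithin_le_nhds,
        self_mem_nhdsWithin] with y hxy hy
      refine sub_eq_zero.1 (hzero y hy _ ?_)
      filter_upwards [hxy, hpq y hy] with z hxz hyz
      rw [map_sub, map_mul, map_mul, ← hxz, ← hyz]
      ring
    · intro x y z _ hy _ hxy hyz
      exact mul_left_cancel₀ (hq y hy) (by linear_combination q z * hxy + q x * hyz)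
  obtain ⟨x₀, hx₀⟩ := hne
  refine ⟨p x₀, q x₀, hq x₀ hx₀, fun x hx => sub_eq_zero.1 (hcancel x hx (q x) _ _ (hq x hx) ?_)⟩
  filter_upwards [hpq x hx] with y hy
  have := congrArg (ev y) (hsame x hx x₀ hx₀)
  rw [map_mul, map_mul] at this
  linear_combination ev y (q x₀) * hy + this

theorem exists_polynomial_fraction_of_lineRationalAt {s : Set ℝ} (hs : IsPreconnected s)
    (hne : s.Nonempty) {f : ℝ → ℝ} (hf : ∀ x ∈ s, LineRationalAt f x) :
    ∃ p q : ℝ[X], q ≠ 0 ∧ ∀ x ∈ s, q.eval x * f x = p.eval x := by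
  refine exists_fraction_of_eventually_eq_fraction (fun x => Polynomial.evalRingHom x) hs hne
    (fun x hx q p₀ q₀ hq H => ?_) fun x hx => (hf x hx).eventually_eq_fraction
  exact eq_zero_of_eventually_polynomial_eval_mul_eq_zero
    (h := fun x => q₀.eval x * f x - p₀.eval x)
    ((q₀.continuousAt.mul (hf x hx).continuousAt).sub p₀.continuousAt) hq H

theorem exists_mvPolynomial_fraction_of_eventually_eq_fraction {σ : Type*} {s : Set (σ → ℝ)}
    (hs : IsPreconnected s) (hne : s.Nonempty) {f : (σ → ℝ) → ℝ}
    (hf : ∀ x ∈ s, LineContinuousAt f x)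
    (hloc : ∀ x ∈ s, ∃ p q : MvPolynomial σ ℝ, q ≠ 0 ∧ ∀ᶠ y in 𝓝 x, eval y q * f y = eval y p) :
    ∃ p q : MvPolynomial σ ℝ, q ≠ 0 ∧ ∀ x ∈ s, eval x q * f x = eval x p :=
  exists_fraction_of_eventually_eq_fraction (fun x => eval x) hs hne
    (fun x hx _ p₀ q₀ hq H =>
      ((hf x hx).eval_mul_sub_eval q₀ p₀).eq_zero_of_eventually_eval_mul_eq_zero hq H) hloc

end Gluing

section ArcRationalLines

theorem evalLine_surjective {σ k : Type*} [Field k] (a : σ → k) {v : σ → k} (hv : v ≠ 0) :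
    Function.Surjective (evalLine (R := k) a v) := by
  obtain ⟨i, hi⟩ := Function.ne_iff.1 hv
  have hX : evalLine (R := k) a v (C (v i)⁻¹ * (X i - C (a i))) = Polynomial.X := by
    simp only [evalLine, map_mul, map_sub, aeval_X, algHom_C, Polynomial.algebraMap_eq,
      add_sub_cancel_left]
    rw [mul_left_comm, ← Polynomial.C_mul, inv_mul_cancel₀ hi, Polynomial.C_1, mul_one]
  intro p
  refine ⟨Polynomial.aeval (C (v i)⁻¹ * (X i - C (a i))) p, ?_⟩
  rw [← Polynomial.aeval_algHom_apply, hX, Polynomial.aeval_X_left_apply]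

theorem ringKrullDim_quotient_ker_evalLine {σ k : Type*} [Field k] (a : σ → k) {v : σ → k}
    (hv : v ≠ 0) :
    ringKrullDim (MvPolynomial σ k ⧸ RingHom.ker (evalLine (R := k) a v)) = 1 := by
  rw [ringKrullDim_eq_of_ringEquiv
    (Ideal.quotientKerAlgEquivOfSurjective (evalLine_surjective a hv)).toRingEquiv,
    Polynomial.ringKrullDim_of_isNoetherianRing, ringKrullDim_eq_zero_of_field, zero_add]

variable {n : ℕ}

theorem add_smul_mem_realPoints_ker_evalLine (a v : Fin n → ℝ) (t : ℝ) :
    a + t • v ∈ realPoints (RingHom.ker (evalLine (R := ℝ) a v)) := by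
  intro P hP
  rw [← eval_evalLine_self, RingHom.mem_ker.1 hP, Polynomial.eval_zero]

theorem ArcRational.lineRationalAt {U : Set (Fin n → ℝ)} {f : (Fin n → ℝ) → ℝ}
    (hf : ArcRational U f) {x : Fin n → ℝ} (hx : x ∈ U) : LineRationalAt f x := by
  intro v
  obtain rfl | hv := eq_or_ne v 0
  · exact ⟨by simp only [smul_zero]; exact continuousAt_const, .C (f x), 1, one_ne_zero, by simp⟩
  have hline := add_smul_mem_realPoints_ker_evalLine x v
  obtain ⟨V, hV, hxV, -, hcont, p, q, hq, hpq⟩ := hf x hx _ (RingHom.ker_isPrime _)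
    (ringKrullDim_quotient_ker_evalLine x hv) (by simpa using hline 0)
  have hlinecont : Continuous fun t : ℝ => x + t • v := by fun_prop
  have hJ : IsOpen {t : ℝ | x + t • v ∈ V} := hV.preimage hlinecont
  have hfcont : ∀ t : ℝ, x + t • v ∈ V → ContinuousAt (fun t : ℝ => f (x + t • v)) t :=
    fun t ht => (hcont.comp hlinecont.continuousOn fun s hs => ⟨hs, hline s⟩).continuousAt
      (hJ.mem_nhds ht)
  have h0 : x + (0 : ℝ) • v ∈ V := by simpa using hxV
  refine ⟨hfcont 0 h0, evalLine x v p, evalLine x v q, hq, ?_⟩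
  filter_upwards [hJ.mem_nhds h0] with t ht
  refine sub_eq_zero.1 (eq_zero_of_eventually_polynomial_eval_mul_eq_zero
    (h := fun t => (evalLine x v q).eval t * f (x + t • v) - (evalLine x v p).eval t)
    (((evalLine x v q).continuousAt.mul (hfcont t ht)).sub (evalLine x v p).continuousAt) hq ?_)
  filter_upwards [hJ.mem_nhds ht] with s hs
  by_cases hqs : eval (x + s • v) q = 0
  · rw [eval_evalLine_self, hqs, zero_mul]
  · rw [eval_evalLine_self, eval_evalLine_self, hpq _ ⟨hs, hline s⟩ hqs, mul_div_cancel₀ _ hqs,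
      sub_self, mul_zero]

end ArcRationalLines

section Interpolation

theorem exists_fraction_interpolating {D ι : Type*} [CommRing D] [Nontrivial D] [Fintype ι]
    {m n : ℕ} (hcard : Fintype.card ι < (m + 1) + (n + 1)) (y a b : ι → D) :
    ∃ p q : D[X], p.natDegree ≤ m ∧ q.natDegree ≤ n ∧ (p ≠ 0 ∨ q ≠ 0) ∧
      ∀ i, b i * p.eval (y i) = a i * q.eval (y i) := by
  let T : Polynomial.degreeLT D (m + 1) × Polynomial.degreeLT D (n + 1) →ₗ[D] ι → D :=
    LinearMap.pi fun i =>
      b i • Polynomial.leval (y i) ∘ₗ (Submodule.subtype _) ∘ₗ LinearMap.fst D _ _ -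
        a i • Polynomial.leval (y i) ∘ₗ (Submodule.subtype _) ∘ₗ LinearMap.snd D _ _
  have hT : ¬ Function.Injective T := by
    intro hinj
    let e := ((Polynomial.degreeLTEquiv D (m + 1)).prodCongr
      (Polynomial.degreeLTEquiv D (n + 1))).trans (LinearEquiv.sumArrowLequivProdArrow _ _ D D).symm
    have := card_le_of_injective D (T ∘ₗ e.symm.toLinearMap) (hinj.comp e.symm.injective)
    simp only [Fintype.card_sum, Fintype.card_fin] at this
    omega
  rw [← LinearMap.ker_eq_bot, Submodule.eq_bot_iff] at hT
  push Not at hT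
  obtain ⟨⟨p, q⟩, hker, hne⟩ := hT
  have hdeg {l : ℕ} (r : Polynomial.degreeLT D (l + 1)) : r.1.natDegree ≤ l :=
    Polynomial.natDegree_le_iff_degree_le.2 (Polynomial.mem_degreeLE.1
      (Polynomial.degreeLT_succ_eq_degreeLE (R := D) ▸ r.2))
  refine ⟨p, q, hdeg p, hdeg q, ?_, fun i => sub_eq_zero.1 (congrFun hker i)⟩
  by_contra! h
  exact hne (Prod.ext (Subtype.ext h.1) (Subtype.ext h.2))

theorem mul_eq_mul_of_eval_eq {D ι : Type*} [CommRing D] [IsDomain D] [Fintype ι] {d : ℕ}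
    (hcard : 2 * d < Fintype.card ι) {y : ι → D} (hy : Function.Injective y) {p q p₀ q₀ : D[X]}
    (hp : p.natDegree ≤ d) (hq : q.natDegree ≤ d) (hp₀ : p₀.natDegree ≤ d)
    (hq₀ : q₀.natDegree ≤ d)
    (h : ∀ i, q₀.eval (y i) * p.eval (y i) = p₀.eval (y i) * q.eval (y i)) :
    q₀ * p = p₀ * q := by
  refine sub_eq_zero.1 (Polynomial.eq_zero_of_natDegree_lt_card_of_eval_eq_zero _ hy ?_ ?_)
  · intro i
    rw [Polynomial.eval_sub, Polynomial.eval_mul, Polynomial.eval_mul, h i, sub_self]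
  · have hle : (q₀ * p - p₀ * q).natDegree ≤ d + d :=
      (Polynomial.natDegree_sub_le_of_le (Polynomial.natDegree_mul_le_of_le hq₀ hp)
        (Polynomial.natDegree_mul_le_of_le hp₀ hq)).trans_eq (max_self _)
    omega

/-- On `J` the function `φ` is a quotient of polynomials of degree at most `d`, written with
denominators cleared. -/
def RationalOfDegreeLEOn (d : ℕ) (φ : ℝ → ℝ) (J : Set ℝ) : Prop :=
  ∃ p q : ℝ[X], q ≠ 0 ∧ p.natDegree ≤ d ∧ q.natDegree ≤ d ∧ ∀ z ∈ J, q.eval z * φ z = p.eval z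

theorem RationalOfDegreeLEOn.eval_eq_of_interpolates {d : ℕ} {φ : ℝ → ℝ} {J : Set ℝ}
    (hφ : RationalOfDegreeLEOn d φ J) (hJ : IsOpen J) (hcont : ContinuousOn φ J) {ι : Type*}
    [Fintype ι] (hcard : 2 * d < Fintype.card ι) {y : ι → ℝ} (hy : Function.Injective y)
    (hyJ : ∀ i, y i ∈ J) {p q : ℝ[X]} (hp : p.natDegree ≤ d) (hq : q.natDegree ≤ d)
    (hpq : ∀ i, p.eval (y i) = q.eval (y i) * φ (y i)) {z : ℝ} (hz : z ∈ J) :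
    p.eval z = q.eval z * φ z := by
  obtain ⟨p₀, q₀, hq₀_ne, hp₀, hq₀, hφ₀⟩ := hφ
  have hcross : q₀ * p = p₀ * q := by
    refine mul_eq_mul_of_eval_eq hcard hy hp hq hp₀ hq₀ fun i => ?_
    rw [hpq i, ← hφ₀ _ (hyJ i)]
    ring
  refine sub_eq_zero.1 (eq_zero_of_eventually_polynomial_eval_mul_eq_zero
    (h := fun z => p.eval z - q.eval z * φ z)
    (p.continuousAt.sub (q.continuousAt.mul (hcont.continuousAt (hJ.mem_nhds hz)))) hq₀_ne ?_)
  filter_upwards [hJ.mem_nhds hz] with w hw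
  have := congrArg (Polynomial.eval w) hcross
  rw [Polynomial.eval_mul, Polynomial.eval_mul, ← hφ₀ w hw] at this
  linear_combination this

end Interpolation

section SeparatelyRational

theorem exists_zariskiDense_of_subset_iUnion {σ ι : Type*} [Finite σ] [Countable ι]
    {B : Set (σ → ℝ)} (hB : IsOpen B) (hne : B.Nonempty) {A : ι → Set (σ → ℝ)}
    (hA : B ⊆ ⋃ i, A i) :
    ∃ i, ∀ g : MvPolynomial σ ℝ, (∀ x ∈ A i, eval x g = 0) → g = 0 := by
  have := Fintype.ofFinite σ
  by_contra! h
  choose g hg hg_ne using h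
  have hdense : Dense (⋂ i, {x | eval x (g i) ≠ 0}) := by
    refine dense_iInter_of_isOpen
      (fun i => isOpen_ne_fun (g i).continuous_eval continuous_const) fun i x => ?_
    refine mem_closure_iff_frequently.2 fun hx => hg_ne i ?_
    exact eq_zero_of_eventually_eval_eq_zero (x := x) (by simpa using hx)
  obtain ⟨x, hxB, hx⟩ := hdense.inter_open_nonempty B hB hne
  obtain ⟨i, hi⟩ := Set.mem_iUnion.1 (hA hxB)
  exact Set.mem_iInter.1 hx i (hg i x hi)

theorem eval_map_eval {σ R : Type*} [CommRing R] (r : (MvPolynomial σ R)[X]) (x : σ → R) (z : R) :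
    (r.map (eval x)).eval z = eval x (r.eval (C z)) := by
  rw [← Polynomial.eval_map_apply, eval_C]

variable {σ : Type*} {J : Set ℝ} {B : Set (σ → ℝ)} {f : ℝ → (σ → ℝ) → ℝ}

theorem eval_mul_eq_of_interpolates_slices {A : Set (σ → ℝ)}
    (hA : ∀ g : MvPolynomial σ ℝ, (∀ x ∈ A, eval x g = 0) → g = 0) (hJ : IsOpen J) {d : ℕ}
    (hcont : ∀ x ∈ A, ContinuousOn (f · x) J)
    (hvert : ∀ x ∈ A, RationalOfDegreeLEOn d (f · x) J) {P Q : ℝ → MvPolynomial σ ℝ}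
    (hQ : ∀ z ∈ J, Q z ≠ 0) (hPQ : ∀ z ∈ J, ∀ x ∈ A, eval x (Q z) * f z x = eval x (P z))
    {ι : Type*} [Fintype ι] (hcard : 2 * d < Fintype.card ι) {y : ι → ℝ}
    (hy : Function.Injective y) (hyJ : ∀ i, y i ∈ J) {p q : (MvPolynomial σ ℝ)[X]}
    (hp : p.natDegree ≤ d) (hq : q.natDegree ≤ d)
    (hpq : ∀ i, Q (y i) * p.eval (C (y i)) = P (y i) * q.eval (C (y i))) {z : ℝ} (hz : z ∈ J) :
    Q z * p.eval (C z) = P z * q.eval (C z) := by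
  have hprod : ∏ i, Q (y i) ≠ 0 := Finset.prod_ne_zero_iff.2 fun i _ => hQ _ (hyJ i)
  refine mul_left_cancel₀ hprod (sub_eq_zero.1 (hA _ fun x hx => ?_))
  by_cases hnodes : ∀ i, eval x (Q (y i)) ≠ 0
  · have hinterp (i : ι) : (p.map (eval x)).eval (y i) =
        (q.map (eval x)).eval (y i) * f (y i) x := by
      have := congrArg (eval x) (hpq i)
      rw [map_mul, map_mul, ← hPQ _ (hyJ i) x hx] at this
      rw [eval_map_eval, eval_map_eval]
      exact mul_left_cancel₀ (hnodes i) (by linear_combination this)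
    have hpz := (hvert x hx).eval_eq_of_interpolates hJ (hcont x hx) hcard hy hyJ
      (Polynomial.natDegree_map_le.trans hp) (Polynomial.natDegree_map_le.trans hq) hinterp hz
    rw [eval_map_eval, eval_map_eval] at hpz
    rw [map_sub, map_mul, map_mul, map_mul, map_mul, hpz, ← hPQ z hz x hx]
    ring
  · push Not at hnodes
    obtain ⟨i, hi⟩ := hnodes
    rw [← mul_sub, map_mul, map_prod, Finset.prod_eq_zero (Finset.mem_univ i) hi, zero_mul]

theorem exists_fraction_of_separately_rational [Finite σ] (hJ : IsOpen J) (hJne : J.Nonempty)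
    (hB : IsOpen B) (hBne : B.Nonempty) (hcont : ∀ x ∈ B, ContinuousOn (f · x) J)
    (hvert : ∀ x ∈ B, ∃ p q : ℝ[X], q ≠ 0 ∧ ∀ z ∈ J, q.eval z * f z x = p.eval z)
    (hline : ∀ z ∈ J, ∀ x ∈ B, LineContinuousAt (f z) x)
    (hslice : ∀ z ∈ J, ∃ P Q : MvPolynomial σ ℝ, Q ≠ 0 ∧ ∀ x ∈ B, eval x Q * f z x = eval x P) :
    ∃ p q : (MvPolynomial σ ℝ)[X], q ≠ 0 ∧
      ∀ z ∈ J, ∀ x ∈ B, eval x (q.eval (C z)) * f z x = eval x (p.eval (C z)) := by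
  choose! P Q hQ hPQ using hslice
  have hJinf : J.Infinite := infinite_of_mem_nhds _ (hJ.mem_nhds hJne.some_mem)
  obtain ⟨d, hd⟩ := exists_zariskiDense_of_subset_iUnion
    (A := fun d : ℕ => {x | x ∈ B ∧ RationalOfDegreeLEOn d (f · x) J}) hB hBne fun x hx => by
      obtain ⟨p, q, hq, hpq⟩ := hvert x hx
      exact Set.mem_iUnion.2 ⟨max p.natDegree q.natDegree, hx, p, q, hq, le_max_left _ _,
        le_max_right _ _, hpq⟩
  let y : Fin (2 * d + 1) → ℝ := fun i => (hJinf.natEmbedding _ i).1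
  have hy : Function.Injective y := fun i j hij =>
    Fin.ext ((hJinf.natEmbedding _).injective (Subtype.ext hij))
  obtain ⟨p, q, hp, hq, hne, hpq⟩ := exists_fraction_interpolating (m := d) (n := d)
    (by rw [Fintype.card_fin]; omega) (fun i => C (y i)) (fun i => P (y i)) fun i => Q (y i)
  have hcross (z : ℝ) (hz : z ∈ J) : Q z * p.eval (C z) = P z * q.eval (C z) :=
    eval_mul_eq_of_interpolates_slices hd hJ (fun x hx => hcont x hx.1) (fun x hx => hx.2) hQ
      (fun z hz x hx => hPQ z hz x hx.1) (by simp) hy (fun i => (hJinf.natEmbedding _ i).2) hp hq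
      hpq hz
  refine ⟨p, q, fun hq0 => hne.elim (fun hp0 => hp0 ?_) (· hq0), fun z hz x hx => ?_⟩
  · refine Polynomial.eq_zero_of_infinite_isRoot p
      ((hJinf.image (C_injective σ ℝ).injOn).mono ?_)
    rintro - ⟨z, hz, rfl⟩
    refine mul_left_cancel₀ (hQ z hz) ?_
    rw [hcross z hz, hq0, Polynomial.eval_zero, mul_zero, mul_zero]
  · refine sub_eq_zero.1 (((hline z hz x hx).eval_mul_sub_eval (q.eval (C z))
      (p.eval (C z))).eq_zero_of_eventually_eval_mul_eq_zero (hQ z hz) ?_)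
    filter_upwards [hB.mem_nhds hx] with w hw
    have := congrArg (eval w) (hcross z hz)
    rw [map_mul, map_mul, ← hPQ z hz w hw] at this
    linear_combination -this

end SeparatelyRational

section Rational

theorem eval_cons_finSuccEquiv_symm {R : Type*} [CommRing R] {k : ℕ}
    (r : (MvPolynomial (Fin k) R)[X]) (z : R) (x : Fin k → R) :
    eval (Fin.cons z x : Fin (k + 1) → R) ((finSuccEquiv R k).symm r) =
      eval x (r.eval (C z)) := by
  rw [eval_eq_eval_mv_eval', AlgEquiv.apply_symm_apply, eval_map_eval]

theorem LineRationalAt.comp_cons_right {k : ℕ} {f : (Fin (k + 1) → ℝ) → ℝ} {z : ℝ} {x : Fin k → ℝ}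
    (hf : LineRationalAt f (Fin.cons z x)) : LineRationalAt (fun x => f (Fin.cons z x)) x :=
  hf.comp (g := fun x : Fin k → ℝ => (Fin.cons z x : Fin (k + 1) → ℝ)) (fun v => Fin.cons 0 v)
    fun v t => by ext i; cases i using Fin.cases <;> simp

theorem LineRationalAt.comp_cons_left {k : ℕ} {f : (Fin (k + 1) → ℝ) → ℝ} {z : ℝ} {x : Fin k → ℝ}
    (hf : LineRationalAt f (Fin.cons z x)) : LineRationalAt (fun z => f (Fin.cons z x)) z :=
  hf.comp (g := fun z : ℝ => (Fin.cons z x : Fin (k + 1) → ℝ)) (fun t => Fin.cons t 0)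
    fun v t => by ext i; cases i using Fin.cases <;> simp

theorem exists_mvPolynomial_fraction_on_pi {k : ℕ} {s : Fin k → Set ℝ} (hs : ∀ i, IsOpen (s i))
    (hconn : ∀ i, IsConnected (s i)) {f : (Fin k → ℝ) → ℝ}
    (hf : ∀ x ∈ Set.univ.pi s, LineRationalAt f x) :
    ∃ p q : MvPolynomial (Fin k) ℝ, q ≠ 0 ∧ ∀ x ∈ Set.univ.pi s, eval x q * f x = eval x p := by
  induction k with
  | zero => exact ⟨C (f 0), 1, one_ne_zero, fun x _ => by simp [Subsingleton.elim x 0]⟩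
  | succ k ih =>
    let B := Set.univ.pi fun i => s (Fin.succ i)
    have hcons : ∀ z ∈ s 0, ∀ x ∈ B, LineRationalAt f (Fin.cons z x) := fun z hz x hx =>
      hf _ fun i _ => Fin.cases hz (fun j => hx j trivial) i
    obtain ⟨p, q, hq, hpq⟩ := exists_fraction_of_separately_rational
      (f := fun z x => f (Fin.cons z x)) (hs 0) (hconn 0).nonempty
      (isOpen_set_pi Set.finite_univ fun i _ => hs i.succ)
      (Set.univ_pi_nonempty_iff.2 fun i => (hconn i.succ).nonempty)
      (fun x hx z hz => (hcons z hz x hx).comp_cons_left.continuousAt.continuousWithinAt)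
      (fun x hx => exists_polynomial_fraction_of_lineRationalAt (hconn 0).isPreconnected
        (hconn 0).nonempty fun z hz => (hcons z hz x hx).comp_cons_left)
      (fun z hz x hx => (hcons z hz x hx).comp_cons_right.lineContinuousAt)
      (fun z hz => ih (fun i => hs i.succ) (fun i => hconn i.succ) fun x hx =>
        (hcons z hz x hx).comp_cons_right)
    refine ⟨(finSuccEquiv ℝ k).symm p, (finSuccEquiv ℝ k).symm q, by simpa using hq, ?_⟩
    intro x hx
    obtain ⟨z, x, rfl⟩ : ∃ z x', x = Fin.cons z x' := ⟨_, _, (Fin.cons_self_tail x).symm⟩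
    rw [eval_cons_finSuccEquiv_symm, eval_cons_finSuccEquiv_symm]
    exact hpq z (hx 0 trivial) x fun i _ => hx i.succ trivial

theorem exists_mvPolynomial_fraction_of_lineRationalAt {n : ℕ} {U : Set (Fin n → ℝ)}
    (hU : IsOpen U) (hconn : IsConnected U) {f : (Fin n → ℝ) → ℝ}
    (hf : ∀ x ∈ U, LineRationalAt f x) :
    ∃ p q : MvPolynomial (Fin n) ℝ, q ≠ 0 ∧ ∀ x ∈ U, eval x q * f x = eval x p := by
  refine exists_mvPolynomial_fraction_of_eventually_eq_fraction hconn.isPreconnected hconn.nonempty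
    (fun x hx => (hf x hx).lineContinuousAt) fun x hx => ?_
  obtain ⟨ε, hε, hball⟩ := Metric.isOpen_iff.1 hU x hx
  have hpi := ball_pi x hε
  obtain ⟨p, q, hq, hpq⟩ := exists_mvPolynomial_fraction_on_pi
    (s := fun i => Metric.ball (x i) ε) (fun i => Metric.isOpen_ball)
    (fun i => Metric.isConnected_ball hε) fun y hy => hf y (hball (hpi ▸ hy))
  refine ⟨p, q, hq, ?_⟩
  filter_upwards [Metric.ball_mem_nhds x hε] with y hy
  exact hpq y (hpi ▸ hy)

end Rational

section HereditarilyRational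

theorem coeff_eq_coeff_mul_of_eventually_eval_mul_eq {m : ℕ} {p q : ℝ[X]} {φ : ℝ → ℝ}
    (hφ : ContinuousAt φ 0) (hq : ∀ i < m, q.coeff i = 0)
    (h : ∀ᶠ t in 𝓝 0, q.eval t * φ t = p.eval t) : p.coeff m = q.coeff m * φ 0 := by
  induction m generalizing p q with
  | zero => simpa [Polynomial.coeff_zero_eq_eval_zero] using h.self_of_nhds.symm
  | succ m ih =>
    have hq0 : q.coeff 0 = 0 := hq 0 m.succ_pos
    have hp0 : p.coeff 0 = 0 := by
      rw [Polynomial.coeff_zero_eq_eval_zero, ← h.self_of_nhds,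
        ← Polynomial.coeff_zero_eq_eval_zero, hq0, zero_mul]
    have hmul {r : ℝ[X]} (hr : r.coeff 0 = 0) (t : ℝ) : t * r.divX.eval t = r.eval t := by
      conv_rhs => rw [← r.X_mul_divX_add, hr]
      simp
    have hX : ∀ᶠ t in 𝓝 0, (Polynomial.X : ℝ[X]).eval t *
        (q.divX.eval t * φ t - p.divX.eval t) = 0 := by
      filter_upwards [h] with t ht
      rw [← hmul hq0, ← hmul hp0] at ht
      rw [Polynomial.eval_X]
      linear_combination ht
    have hdivX : ∀ᶠ t in 𝓝 0, q.divX.eval t * φ t = p.divX.eval t := by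
      filter_upwards [hX] with t ht
      obtain rfl | ht0 := eq_or_ne t 0
      · exact sub_eq_zero.1 (eq_zero_of_eventually_polynomial_eval_mul_eq_zero
          (h := fun t => q.divX.eval t * φ t - p.divX.eval t)
          ((q.divX.continuousAt.mul hφ).sub p.divX.continuousAt) Polynomial.X_ne_zero hX)
      · rw [Polynomial.eval_X] at ht
        exact sub_eq_zero.1 ((mul_eq_zero.1 ht).resolve_left ht0)
    rw [← Polynomial.coeff_divX, ← Polynomial.coeff_divX]
    exact ih (fun i hi => by rw [Polynomial.coeff_divX]; exact hq _ (by omega)) hdivX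

theorem eval_coeff_evalLine_X {σ R : Type*} [CommRing R] (z v : σ → R) (P : MvPolynomial σ R)
    (m : ℕ) :
    eval z ((evalLine X (fun i => C (v i)) P).coeff m) = (evalLine z v P).coeff m := by
  have h := evalLine_map (aeval z : MvPolynomial σ R →ₐ[R] R) X (fun i => C (v i)) P
  have hX : (aeval z : MvPolynomial σ R →ₐ[R] R) ∘ X = z := by ext i; simp
  have hC : (aeval z : MvPolynomial σ R →ₐ[R] R) ∘ (fun i => C (v i)) = v := by ext i; simp
  rw [hX, hC] at h
  rw [← h, Polynomial.coeff_map]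
  rfl

variable {n : ℕ} {I : Ideal (MvPolynomial (Fin n) ℝ)}

theorem exists_coeff_evalLine_X_notMem {x y : Fin n → ℝ} (hx : x ∈ realPoints I)
    {q : MvPolynomial (Fin n) ℝ} (hq : eval y q ≠ 0) :
    ∃ m, (evalLine X (fun i => C ((y - x) i)) q).coeff m ∉ I := by
  by_contra! h
  refine evalLine_ne_zero (x := x) hq (Polynomial.ext fun m => ?_)
  rw [← eval_coeff_evalLine_X, hx _ (h m), Polynomial.coeff_zero]

-- Along the lines with a fixed direction `v` through the points `z` of `Z(I)`, the denominator
-- vanishes at `z` to the generic order `m`, so `f z` is the quotient of the `m`-th coefficients.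
theorem exists_fraction_on_realPoints [hI : I.IsPrime] {U : Set (Fin n → ℝ)} (hU : IsOpen U)
    {f : (Fin n → ℝ) → ℝ} (hf : ∀ x ∈ U, LineContinuousAt f x) {p q : MvPolynomial (Fin n) ℝ}
    (hq : q ≠ 0) (hpq : ∀ x ∈ U, eval x q * f x = eval x p) :
    ∃ p' q' : MvPolynomial (Fin n) ℝ, q' ∉ I ∧
      ∀ x ∈ U ∩ realPoints I, eval x q' ≠ 0 → f x = eval x p' / eval x q' := by
  classical
  obtain hempty | ⟨x, -, hxI⟩ := (U ∩ realPoints I).eq_empty_or_nonempty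
  · exact ⟨0, 1, hI.one_notMem, by simp [hempty]⟩
  obtain ⟨y, hy⟩ := exists_eval_ne_zero hq
  have hex := exists_coeff_evalLine_X_notMem hxI hy
  set v := y - x
  set m := Nat.find hex
  refine ⟨(evalLine X (fun i => C (v i)) p).coeff m, (evalLine X (fun i => C (v i)) q).coeff m,
    Nat.find_spec hex, fun z ⟨hzU, hzI⟩ hz => ?_⟩
  have hlow : ∀ i < m, (evalLine z v q).coeff i = 0 := fun i hi => by
    rw [← eval_coeff_evalLine_X]
    exact hzI _ (not_not.1 (Nat.find_min hex hi))
  have hline : ∀ᶠ t in 𝓝 (0 : ℝ),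
      (evalLine z v q).eval t * f (z + t • v) = (evalLine z v p).eval t := by
    have hcont : Continuous fun t : ℝ => z + t • v := by fun_prop
    filter_upwards [(hU.preimage hcont).mem_nhds (by simpa using hzU)] with t ht
    rw [eval_evalLine_self, eval_evalLine_self, hpq _ ht]
  have hcoeff := coeff_eq_coeff_mul_of_eventually_eval_mul_eq (hf z hzU v) hlow hline
  rw [zero_smul, add_zero] at hcoeff
  rw [eval_coeff_evalLine_X] at hz
  rw [eval_coeff_evalLine_X, eval_coeff_evalLine_X, hcoeff, mul_div_cancel_left₀ _ hz]

end HereditarilyRational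

section TranscendenceDegree

theorem ringKrullDim_eq_one_of_isIntegral {R S : Type*} [CommRing R] [IsDomain R] [CommRing S]
    [IsDomain S] [Algebra R S] [FaithfulSMul R S] [Algebra.IsIntegral R S]
    (hR : ringKrullDim R = 1) : ringKrullDim S = 1 := by
  have hinj := FaithfulSMul.algebraMap_injective R S
  have hS : Ring.KrullDimLE 1 S := by
    have hbot : (⊥ : Ideal S).IsPrime := Ideal.isPrime_bot
    have hR1 : Ring.KrullDimLE 1 R := Ring.krullDimLE_iff.2 hR.le
    rw [Ring.krullDimLE_one_iff_of_isPrime_bot] at hR1 ⊢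
    intro I hI hIp
    obtain ⟨x, hxI, hx0⟩ := Submodule.exists_mem_ne_zero_of_ne_bot hI
    have hcomap : I.comap (algebraMap R S) ≠ ⊥ :=
      Ideal.comap_ne_bot_of_integral_mem hx0 hxI (Algebra.IsIntegral.isIntegral x)
    exact Ideal.isMaximal_of_isIntegral_of_isMaximal_comap I (hR1 _ hcomap inferInstance)
  refine le_antisymm (Ring.krullDimLE_iff.1 hS) (not_lt.1 fun hlt => ?_)
  have hS0 : Ring.KrullDimLE 0 S := Ring.krullDimLE_iff.2 (ENat.WithBot.lt_add_one_iff.1 hlt)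
  let _ := (isField_of_isIntegral_of_isField hinj Ring.KrullDimLE.isField_of_isDomain).toField
  exact zero_ne_one ((ringKrullDim_eq_zero_of_field R).symm.trans hR)

theorem ringKrullDim_eq_one_of_trdeg_eq_one {k A : Type*} [Field k] [CommRing A] [IsDomain A]
    [Algebra k A] [Algebra.FiniteType k A] (h : Algebra.trdeg k A = 1) : ringKrullDim A = 1 := by
  obtain ⟨s, φ, hφ, hint⟩ := exists_integral_inj_algHom_of_fg k A
  let _ : Algebra (MvPolynomial (Fin s) k) A := φ.toRingHom.toAlgebra
  have _ : IsScalarTower k (MvPolynomial (Fin s) k) A := .of_algebraMap_eq' φ.comp_algebraMap.symm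
  have _ : FaithfulSMul (MvPolynomial (Fin s) k) A :=
    (faithfulSMul_iff_algebraMap_injective _ _).2 hφ
  have _ : Algebra.IsIntegral (MvPolynomial (Fin s) k) A := ⟨hint⟩
  have hs : s = 1 := by
    have htrdeg := lift_trdeg_add_eq k (MvPolynomial (Fin s) k) A
    simpa [h, trdeg_eq_zero] using htrdeg
  subst hs
  apply ringKrullDim_eq_one_of_isIntegral (R := MvPolynomial (Fin 1) k)
  simp [MvPolynomial.ringKrullDim_of_isNoetherianRing]

theorem ringKrullDim_eq_one_of_isAlgebraic_adjoin {k A : Type*} [Field k] [CommRing A] [IsDomain A]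
    [Algebra k A] [Algebra.FiniteType k A] {g : A} (hg : Transcendental k g)
    (halg : Algebra.IsAlgebraic (Algebra.adjoin k {g}) A) : ringKrullDim A = 1 := by
  refine ringKrullDim_eq_one_of_trdeg_eq_one (k := k) (le_antisymm ?_ ?_)
  · simpa using Algebra.IsAlgebraic.trdeg_le_cardinalMk k (A := A) {g}
  · have hindep : AlgebraicIndependent k fun _ : Unit => g :=
      (algebraicIndependent_singleton_iff ()).2 hg
    simpa using hindep.lift_cardinalMk_le_trdeg

end TranscendenceDegree

section TangentVectorField

open TensorProduct in
theorem kaehlerDifferential_D_ne_zero_of_transcendental {L K : Type*} [Field L] [CharZero L]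
    [Field K] [Algebra L K] [Algebra.EssFiniteType L K] {g : K} (hg : Transcendental L g) :
    KaehlerDifferential.D L K g ≠ 0 := by
  let _ : Algebra L[X] K := (Polynomial.aeval g).toRingHom.toAlgebra
  have _ : IsScalarTower L L[X] K := .of_algebraMap_eq' (Polynomial.aeval g).comp_algebraMap.symm
  have _ : FaithfulSMul L[X] K := (faithfulSMul_iff_algebraMap_injective _ _).2
    (transcendental_iff_injective.1 hg)
  let F := FractionRing L[X]
  let _ : Algebra F K := FractionRing.liftAlgebra L[X] K
  have _ : IsScalarTower L[X] F K := FractionRing.isScalarTower_liftAlgebra L[X] K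
  have _ : IsScalarTower L F K := .to₁₃₄ L L[X] F K
  have _ : Algebra.EssFiniteType F K := .of_comp L F K
  have _ : Algebra.FormallySmooth L[X] F := .of_isLocalization (nonZeroDivisors L[X])
  have _ : Algebra.FormallySmooth L[X] K := .comp L[X] F K
  have hinj : Function.Injective (KaehlerDifferential.mapBaseChange L L[X] K) := by
    rw [injective_iff_map_eq_zero]
    intro x hx
    obtain ⟨y, rfl⟩ := (Algebra.H1Cotangent.exact_δ_mapBaseChange L L[X] K x).1 hx
    rw [Subsingleton.elim y 0, map_zero]
  have hX : (1 : K) ⊗ₜ[L[X]] KaehlerDifferential.D L L[X] Polynomial.X ≠ 0 := by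
    intro h
    have := congrArg (TensorProduct.rid L[X] K ∘
      (KaehlerDifferential.polynomialEquiv L).toLinearMap.lTensor K) h
    simp [KaehlerDifferential.polynomialEquiv_D] at this
  have hmap := (map_ne_zero_iff _ hinj).2 hX
  rwa [KaehlerDifferential.mapBaseChange_tmul, one_smul, KaehlerDifferential.map_D,
    show algebraMap L[X] K Polynomial.X = g from Polynomial.aeval_X g] at hmap

theorem exists_derivation_ne_zero_of_transcendental {L K : Type*} [Field L] [CharZero L]
    [Field K] [Algebra L K] [Algebra.EssFiniteType L K] {g : K} (hg : Transcendental L g) :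
    ∃ d : Derivation L K K, d g ≠ 0 := by
  have hD := kaehlerDifferential_D_ne_zero_of_transcendental hg
  rw [ne_eq, ← Module.forall_dual_apply_eq_zero_iff K] at hD
  push Not at hD
  obtain ⟨l, hl⟩ := hD
  exact ⟨KaehlerDifferential.linearMapEquivDerivation L K l, hl⟩

theorem algebraicIndependent_pair_of_transcendental {k A : Type*} [Field k] [CommRing A]
    [Algebra k A] {g r : A} (hg : Transcendental k g)
    (hr : Transcendental (Algebra.adjoin k {g}) r) : AlgebraicIndependent k ![r, g] := by
  have hindep : AlgebraicIndependent k ![g] := algebraicIndependent_iff_transcendental.2 hg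
  have hopt := (hindep.option_iff_transcendental r).2 (by
    rwa [Matrix.range_cons, Matrix.range_empty, Set.union_empty])
  convert hopt.comp _ (_root_.finSuccEquiv 1).injective
  ext i
  fin_cases i <;> rfl

theorem exists_derivation_eq_zero_and_ne_zero {k K : Type*} [Field k] [CharZero k] [Field K]
    [Algebra k K] [Algebra.EssFiniteType k K] {r g : K} (h : AlgebraicIndependent k ![r, g]) :
    ∃ d : Derivation k K K, d r = 0 ∧ d g ≠ 0 := by
  have hgr : Transcendental (IntermediateField.adjoin k {r}) g := by
    have hadj := h.transcendental_adjoin (s := {0}) (i := 1) (by simp)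
    rw [Set.image_singleton] at hadj
    exact IntermediateField.transcendental_adjoin_iff.2 hadj
  have _ : Algebra.EssFiniteType (IntermediateField.adjoin k {r}) K := .of_comp k _ K
  obtain ⟨d, hd⟩ := exists_derivation_ne_zero_of_transcendental hgr
  exact ⟨d.restrictScalars k,
    d.map_algebraMap ⟨r, IntermediateField.mem_adjoin_simple_self k r⟩, hd⟩

/-- A polynomial vector field `v` is tangent to the zero locus of `I`: the derivation
`∑ i, v i * ∂/∂X i` maps `I` into itself. -/
def TangentTo {σ k : Type*} [CommRing k] (I : Ideal (MvPolynomial σ k))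
    (v : σ → MvPolynomial σ k) : Prop :=
  ∀ P ∈ I, mkDerivation k v P ∈ I

theorem exists_algebraMap_mkDerivation_eq_mul {σ k K : Type*} [Finite σ] [CommRing k] [Field K]
    (I : Ideal (MvPolynomial σ k)) [Algebra k K] [Algebra (MvPolynomial σ k) K]
    [IsScalarTower k (MvPolynomial σ k) K] [Algebra (MvPolynomial σ k ⧸ I) K]
    [IsScalarTower (MvPolynomial σ k) (MvPolynomial σ k ⧸ I) K]
    [IsFractionRing (MvPolynomial σ k ⧸ I) K] (d : Derivation k K K) :
    ∃ v : σ → MvPolynomial σ k, ∃ b : K, b ≠ 0 ∧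
      ∀ P, algebraMap _ K (mkDerivation k v P) = b * d (algebraMap _ K P) := by
  obtain ⟨b, hb⟩ := IsLocalization.exist_integer_multiples_of_finite
    (nonZeroDivisors (MvPolynomial σ k ⧸ I)) fun i => d (algebraMap (MvPolynomial σ k) K (X i))
  choose w hw using hb
  choose v hv using fun i => Ideal.Quotient.mk_surjective (I := I) (w i)
  refine ⟨v, algebraMap (MvPolynomial σ k ⧸ I) K b,
    (IsLocalization.map_units K b).ne_zero, fun P => ?_⟩
  have hder : (Algebra.linearMap (MvPolynomial σ k) K).compDer (mkDerivation k v) =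
      algebraMap (MvPolynomial σ k ⧸ I) K b • d.compAlgebraMap (MvPolynomial σ k) := by
    refine derivation_ext fun i => ?_
    have hvi : algebraMap (MvPolynomial σ k) K (v i) =
        algebraMap (MvPolynomial σ k ⧸ I) K (w i) := by
      rw [IsScalarTower.algebraMap_apply (MvPolynomial σ k) (MvPolynomial σ k ⧸ I) K,
        Ideal.Quotient.algebraMap_eq, hv]
    simpa [hvi, Algebra.smul_def] using hw i
  exact DFunLike.congr_fun hder P

theorem exists_tangentTo_of_algebraicIndependent {σ k : Type*} [Finite σ] [Field k] [CharZero k]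
    {I : Ideal (MvPolynomial σ k)} [I.IsPrime] {r g : MvPolynomial σ k}
    (h : AlgebraicIndependent k ![Ideal.Quotient.mk I r, Ideal.Quotient.mk I g]) :
    ∃ v, TangentTo I v ∧ mkDerivation k v r ∈ I ∧ mkDerivation k v g ∉ I := by
  let A := MvPolynomial σ k ⧸ I
  let K := FractionRing A
  have hker (P : MvPolynomial σ k) : algebraMap (MvPolynomial σ k) K P = 0 ↔ P ∈ I := by
    rw [IsScalarTower.algebraMap_apply (MvPolynomial σ k) A K, FaithfulSMul.algebraMap_eq_zero_iff]
    exact Ideal.Quotient.eq_zero_iff_mem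
  have _ : Algebra.EssFiniteType A K := .of_isLocalization K (nonZeroDivisors A)
  have _ : Algebra.EssFiniteType k K := .comp k A K
  have hK : AlgebraicIndependent k ![algebraMap _ K r, algebraMap _ K g] := by
    have := h.map' (f := IsScalarTower.toAlgHom k A K) (IsFractionRing.injective A K)
    convert this
    ext i
    fin_cases i <;> rfl
  obtain ⟨d, hdr, hdg⟩ := exists_derivation_eq_zero_and_ne_zero hK
  obtain ⟨v, b, hb, hv⟩ := exists_algebraMap_mkDerivation_eq_mul I d
  refine ⟨v, fun P hP => ?_, ?_, ?_⟩
  · rw [← hker, hv, (hker P).2 hP, map_zero, mul_zero]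
  · rw [← hker, hv, hdr, mul_zero]
  · rw [← hker, hv]
    exact mul_ne_zero hb hdg

end TangentVectorField

section Flow

theorem hasDerivAt_eval_mkDerivation {σ : Type*} {v : σ → MvPolynomial σ ℝ} {γ : ℝ → σ → ℝ}
    {t : ℝ} (h : ∀ i, HasDerivAt (fun s => γ s i) (eval (γ t) (v i)) t)
    (P : MvPolynomial σ ℝ) :
    HasDerivAt (fun s => eval (γ s) P) (eval (γ t) (mkDerivation ℝ v P)) t := by
  induction P using MvPolynomial.induction_on with
  | C a => simpa using hasDerivAt_const t a
  | add p q hp hq => simpa only [map_add] using hp.fun_add hq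
  | mul_X p i hp =>
    simp only [map_mul, eval_X]
    refine (hp.fun_mul (h i)).congr_deriv ?_
    simp only [Derivation.leibniz, mkDerivation_X, map_mul, eval_X, smul_eq_mul, map_add]
    ring

theorem exists_eventually_hasDerivAt_eval {σ : Type*} [Finite σ] (v : σ → MvPolynomial σ ℝ)
    (x : σ → ℝ) : ∃ γ : ℝ → σ → ℝ, γ 0 = x ∧
      ∀ᶠ t in 𝓝 0, HasDerivAt γ (fun i => eval (γ t) (v i)) t := by
  have _ := Fintype.ofFinite σ
  have hv : ContDiffAt ℝ 1 (fun y i => eval y (v i)) x :=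
    contDiffAt_pi.2 fun i => (AnalyticOnNhd.eval_mvPolynomial (v i) x trivial).contDiffAt
  obtain ⟨γ, hγ, ε, hε, hderiv⟩ :=
    hv.exists_forall_mem_closedBall_exists_eq_forall_mem_Ioo_hasDerivAt₀ 0
  exact ⟨γ, hγ, mem_of_superset (Ioo_mem_nhds (by linarith) (by linarith)) hderiv⟩

theorem eventually_eq_zero_of_hasDerivAt_clm_apply {E : Type*} [NormedAddCommGroup E]
    [NormedSpace ℝ E] {A : ℝ → E →L[ℝ] E} {y : ℝ → E} {t₀ : ℝ} (hA : ContinuousAt A t₀)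
    (hy : ∀ᶠ t in 𝓝 t₀, HasDerivAt y (A t (y t)) t) (h0 : y t₀ = 0) :
    ∀ᶠ t in 𝓝 t₀, y t = 0 := by
  have hlip : ∀ᶠ t in 𝓝 t₀, LipschitzOnWith (‖A t₀‖₊ + 1) (A t) Set.univ := by
    filter_upwards [hA.nnnorm.eventually_le_const (lt_add_one ‖A t₀‖₊)] with t ht
    exact ((A t).lipschitz.weaken ht).lipschitzOnWith
  exact ODE_solution_unique_of_eventually (g := fun _ => 0) hlip
    (hy.mono fun t ht => ⟨ht, trivial⟩)
    (.of_forall fun t => ⟨by simpa using hasDerivAt_const t (0 : E), trivial⟩) h0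

variable {n : ℕ} {I : Ideal (MvPolynomial (Fin n) ℝ)} {v : Fin n → MvPolynomial (Fin n) ℝ}
  {x : Fin n → ℝ}

-- The values of generators of `I` along `γ` solve a linear differential equation.
theorem TangentTo.eventually_mem_realPoints (hv : TangentTo I v) {γ : ℝ → Fin n → ℝ} {t₀ : ℝ}
    (hγ : ∀ᶠ t in 𝓝 t₀, HasDerivAt γ (fun i => eval (γ t) (v i)) t)
    (h₀ : γ t₀ ∈ realPoints I) : ∀ᶠ t in 𝓝 t₀, γ t ∈ realPoints I := by
  obtain ⟨m, s, hs⟩ := Submodule.fg_iff_exists_fin_generating_family.1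
    (IsNoetherian.noetherian I)
  have hsI (i : Fin m) : s i ∈ I := hs ▸ Submodule.subset_span ⟨i, rfl⟩
  have hM (i : Fin m) : ∃ c : Fin m → MvPolynomial (Fin n) ℝ,
      ∑ j, c j * s j = mkDerivation ℝ v (s i) :=
    (Submodule.mem_span_range_iff_exists_fun _).1 (hs ▸ hv _ (hsI i))
  choose M hM using hM
  let A (t : ℝ) : (Fin m → ℝ) →L[ℝ] (Fin m → ℝ) :=
    (Matrix.toLin' (Matrix.of fun i j => eval (γ t) (M i j))).toContinuousLinearMap
  have hA : ContinuousAt A t₀ := by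
    have htoCLM := LinearMap.continuous_of_finiteDimensional
      (LinearMap.toContinuousLinearMap.toLinearMap ∘ₗ
        (Matrix.toLin' : Matrix (Fin m) (Fin m) ℝ ≃ₗ[ℝ] _).toLinearMap)
    refine htoCLM.continuousAt.comp (f := fun t => Matrix.of fun i j => eval (γ t) (M i j)) ?_
    exact continuousAt_pi.2 fun i => continuousAt_pi.2 fun j =>
      (MvPolynomial.continuous_eval _).continuousAt.comp hγ.self_of_nhds.continuousAt
  have hzero : ∀ᶠ t in 𝓝 t₀, (fun i => eval (γ t) (s i)) = 0 := by
    refine eventually_eq_zero_of_hasDerivAt_clm_apply hA ?_ (funext fun i => h₀ _ (hsI i))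
    filter_upwards [hγ] with t ht
    refine hasDerivAt_pi.2 fun i =>
      (hasDerivAt_eval_mkDerivation (hasDerivAt_pi.1 ht) _).congr_deriv ?_
    simp [A, ← hM, Matrix.mulVec, dotProduct]
  filter_upwards [hzero] with t ht P hP
  have hle : I ≤ RingHom.ker (eval (γ t)) := by
    rw [← hs, Submodule.span_le]
    rintro _ ⟨i, rfl⟩
    exact congrFun ht i
  exact hle hP

theorem TangentTo.eval_mkDerivation_eq_zero (hv : TangentTo I v) {g : MvPolynomial (Fin n) ℝ}
    (hx : x ∈ realPoints I) (hmax : IsLocalMaxOn (fun y => eval y g) (realPoints I) x) :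
    eval x (mkDerivation ℝ v g) = 0 := by
  obtain ⟨γ, rfl, hγ⟩ := exists_eventually_hasDerivAt_eval v x
  have hmem := hv.eventually_mem_realPoints hγ hx
  have hcont : Tendsto γ (𝓝 0) (𝓝[realPoints I] (γ 0)) :=
    tendsto_nhdsWithin_iff.2 ⟨hγ.self_of_nhds.continuousAt, hmem⟩
  have hmaxγ : IsLocalMax (fun t => eval (γ t) g) 0 := hcont.eventually hmax
  exact hmaxγ.hasDerivAt_eq_zero (hasDerivAt_eval_mkDerivation (hasDerivAt_pi.1 hγ.self_of_nhds) g)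

end Flow

section CurveSelection

theorem TangentTo.sup_span_sub_C {σ k : Type*} [CommRing k] {I : Ideal (MvPolynomial σ k)}
    {v : σ → MvPolynomial σ k} (hv : TangentTo I v) {r : MvPolynomial σ k}
    (hr : mkDerivation k v r ∈ I) (c : k) : TangentTo (I ⊔ Ideal.span {r - C c}) v := by
  intro P hP
  obtain ⟨p, hp, _, hs, rfl⟩ := Submodule.mem_sup.1 hP
  obtain ⟨s, rfl⟩ := Ideal.mem_span_singleton'.1 hs
  have hleibniz : mkDerivation k v (p + s * (r - C c)) =
      (mkDerivation k v p + s * mkDerivation k v r) + mkDerivation k v s * (r - C c) := by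
    simp only [map_add, map_sub, Derivation.leibniz, derivation_C, smul_eq_mul]
    ring
  rw [hleibniz]
  exact Submodule.add_mem_sup (I.add_mem (hv p hp) (I.mul_mem_left s hr))
    (Ideal.mul_mem_left _ _ (Ideal.mem_span_singleton_self _))

theorem exists_pos_isMaxOn_level {X : Type*} [TopologicalSpace X] {Z : Set X} {g r : X → ℝ}
    {c : ℝ} (hg : Continuous g) (hr : Continuous r) (hK : IsCompact (Z ∩ {x | r x ≤ c}))
    (hpos : ∃ x ∈ Z, 0 < g x ∧ r x < c) :
    ∃ x ∈ Z, 0 < g x ∧ r x < c ∧ IsMaxOn g (Z ∩ {y | r y = r x}) x := by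
  obtain ⟨x₁, hx₁Z, hgx₁, hrx₁⟩ := hpos
  have hcont : Continuous fun x => g x * (c - r x) := by fun_prop
  obtain ⟨x, ⟨hxZ, hrx⟩, hmax⟩ := hK.exists_isMaxOn ⟨x₁, hx₁Z, hrx₁.le⟩ hcont.continuousOn
  have hx : 0 < g x * (c - r x) :=
    (mul_pos hgx₁ (sub_pos.2 hrx₁)).trans_le (hmax ⟨hx₁Z, hrx₁.le⟩)
  have hgx : 0 < g x := pos_of_mul_pos_left hx (sub_nonneg.2 hrx)
  have hcx : 0 < c - r x := pos_of_mul_pos_right hx hgx.le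
  refine ⟨x, hxZ, hgx, sub_pos.1 hcx, fun y ⟨hyZ, hy⟩ => le_of_mul_le_mul_right ?_ hcx⟩
  have hle : g y * (c - r y) ≤ g x * (c - r x) := hmax ⟨hyZ, hy.trans_le hrx⟩
  rwa [show r y = r x from hy] at hle

variable {n : ℕ} {I : Ideal (MvPolynomial (Fin n) ℝ)} {a : Fin n → ℝ}

theorem isClosed_realPoints (I : Ideal (MvPolynomial (Fin n) ℝ)) : IsClosed (realPoints I) := by
  have h : realPoints I = ⋂ P ∈ I, {x | eval x P = 0} := by
    ext x
    simp [realPoints]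
  rw [h]
  exact isClosed_biInter fun P _ => isClosed_eq (MvPolynomial.continuous_eval P) continuous_const

theorem realPoints_bot : realPoints (⊥ : Ideal (MvPolynomial (Fin n) ℝ)) = Set.univ := by
  ext x
  simp [realPoints]

theorem realPoints_sup_span_singleton (I : Ideal (MvPolynomial (Fin n) ℝ))
    (h : MvPolynomial (Fin n) ℝ) :
    realPoints (I ⊔ Ideal.span {h}) = realPoints I ∩ {x | eval x h = 0} := by
  ext x
  change I ⊔ Ideal.span {h} ≤ RingHom.ker (eval x) ↔ _
  rw [sup_le_iff, Ideal.span_singleton_le_iff_mem]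
  rfl

-- Flowing along `v` moves a point inside a level set of `r`, so `v g` vanishes wherever `g` is
-- maximal on such a level set.
theorem TangentTo.mem_closure_eval_mkDerivation_eq_zero {v : Fin n → MvPolynomial (Fin n) ℝ}
    (hv : TangentTo I v) {g r : MvPolynomial (Fin n) ℝ} (hr : mkDerivation ℝ v r ∈ I)
    (hdist : ∀ x, dist x a ^ 2 ≤ eval x r) (hra : eval a r = 0)
    (ha : a ∈ closure (realPoints I ∩ {x | 0 < eval x g})) :
    a ∈ closure (realPoints I ∩ {x | 0 < eval x g} ∩ {x | eval x (mkDerivation ℝ v g) = 0}) := by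
  rw [Metric.mem_closure_iff]
  intro δ hδ
  have hcont := MvPolynomial.continuous_eval r
  have hK : IsCompact (realPoints I ∩ {x | eval x r ≤ δ ^ 2}) := by
    refine Metric.isCompact_of_isClosed_isBounded
      ((isClosed_realPoints I).inter (isClosed_le hcont continuous_const))
      ((Metric.isBounded_closedBall (x := a) (r := δ)).subset fun x hx => ?_)
    exact le_of_sq_le_sq ((hdist x).trans hx.2) hδ.le
  obtain ⟨x₁, hrx₁, hx₁, hgx₁⟩ := mem_closure_iff.1 ha {x | eval x r < δ ^ 2}
    (isOpen_lt hcont continuous_const) (by simpa [hra] using pow_pos hδ 2)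
  obtain ⟨x, hx, hgx, hrx, hmax⟩ := exists_pos_isMaxOn_level
    (MvPolynomial.continuous_eval g) hcont hK ⟨x₁, hx₁, hgx₁, hrx₁⟩
  have hlevel : realPoints (I ⊔ Ideal.span {r - C (eval x r)}) =
      realPoints I ∩ {y | eval y r = eval x r} := by
    simp [realPoints_sup_span_singleton, sub_eq_zero]
  have htan := hv.sup_span_sub_C hr (eval x r)
  refine ⟨x, ⟨⟨hx, hgx⟩, htan.eval_mkDerivation_eq_zero ?_ ?_⟩, ?_⟩
  · exact hlevel ▸ ⟨hx, rfl⟩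
  · exact hlevel ▸ hmax.localize
  · exact dist_comm a x ▸ lt_of_pow_lt_pow_left₀ 2 hδ.le ((hdist x).trans_lt hrx)

theorem exists_mem_minimalPrimes_mem_closure {J : Ideal (MvPolynomial (Fin n) ℝ)}
    {S : Set (Fin n → ℝ)} (h : a ∈ closure (realPoints J ∩ S)) :
    ∃ p ∈ J.minimalPrimes, a ∈ closure (realPoints p ∩ S) := by
  have hsub : realPoints J ∩ S ⊆ ⋃ p ∈ J.minimalPrimes, realPoints p ∩ S := by
    rintro x ⟨hxJ, hxS⟩
    have _ : (RingHom.ker (eval x)).IsPrime := RingHom.ker_isPrime _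
    obtain ⟨p, hp, hpx⟩ := Ideal.exists_minimalPrimes_le (show J ≤ RingHom.ker (eval x) from hxJ)
    exact Set.mem_biUnion hp ⟨hpx, hxS⟩
  have hcl := closure_mono hsub h
  rw [(Ideal.finite_minimalPrimes_of_isNoetherianRing _ J).closure_biUnion] at hcl
  simpa only [Set.mem_iUnion, exists_prop] using hcl

theorem exists_isPrime_mem_closure_maximal {S : Set (Fin n → ℝ)} (h : a ∈ closure S) :
    ∃ I : Ideal (MvPolynomial (Fin n) ℝ), I.IsPrime ∧ a ∈ closure (realPoints I ∩ S) ∧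
      ∀ h ∉ I, a ∉ closure (realPoints I ∩ S ∩ {x | eval x h = 0}) := by
  obtain ⟨I, ⟨hI, haI⟩, hmax⟩ := WellFounded.has_min (wellFounded_gt)
    {I : Ideal (MvPolynomial (Fin n) ℝ) | I.IsPrime ∧ a ∈ closure (realPoints I ∩ S)}
    ⟨⊥, Ideal.isPrime_bot, by rwa [realPoints_bot, Set.univ_inter]⟩
  refine ⟨I, hI, haI, fun h hh hcl => ?_⟩
  rw [Set.inter_right_comm, ← realPoints_sup_span_singleton] at hcl
  obtain ⟨p, hp, hap⟩ := exists_mem_minimalPrimes_mem_closure hcl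
  have hle := sup_le_iff.1 hp.1.2
  refine hmax p ⟨hp.1.1, hap⟩ (lt_of_le_of_ne hle.1 ?_)
  rintro rfl
  exact hh (hle.2 (Ideal.mem_span_singleton_self h))

theorem transcendental_mk_of_mem_closure {g : MvPolynomial (Fin n) ℝ} (hga : eval a g ≤ 0)
    (ha : a ∈ closure (realPoints I ∩ {x | 0 < eval x g})) :
    Transcendental ℝ (Ideal.Quotient.mk I g) := by
  rintro ⟨c, hc, hcg⟩
  have hmem : Polynomial.aeval g c ∈ I := by
    rw [← Ideal.Quotient.eq_zero_iff_mem, ← hcg]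
    exact (Polynomial.aeval_algHom_apply (Ideal.Quotient.mkₐ ℝ I) g c).symm
  have hroot {x : Fin n → ℝ} (hx : x ∈ realPoints I) : c.IsRoot (eval x g) := by
    have heval := Polynomial.aeval_algHom_apply (MvPolynomial.aeval x) g c
    rw [MvPolynomial.aeval_eq_eval, hx _ hmem] at heval
    simpa [Polynomial.IsRoot] using heval
  have hfin : {t | c.IsRoot t ∧ 0 < t}.Finite :=
    (Polynomial.finite_setOfPred_isRoot hc).subset fun t ht => ht.1
  obtain ⟨x, hxg, hxI, hx⟩ := mem_closure_iff.1 ha _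
    (hfin.isClosed.isOpen_compl.preimage (MvPolynomial.continuous_eval g))
    fun h => h.2.not_ge hga
  exact hxg ⟨hroot hxI, hx⟩

theorem isAlgebraic_mk_of_dist_sq_le [I.IsPrime] {g r : MvPolynomial (Fin n) ℝ}
    (hg : Transcendental ℝ (Ideal.Quotient.mk I g))
    (ha : a ∈ closure (realPoints I ∩ {x | 0 < eval x g}))
    (hmax : ∀ h ∉ I, a ∉ closure (realPoints I ∩ {x | 0 < eval x g} ∩ {x | eval x h = 0}))
    (hdist : ∀ x, dist x a ^ 2 ≤ eval x r) (hra : eval a r = 0) :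
    IsAlgebraic (Algebra.adjoin ℝ {Ideal.Quotient.mk I g}) (Ideal.Quotient.mk I r) := by
  by_contra hr
  obtain ⟨v, hv, hvr, hvg⟩ := exists_tangentTo_of_algebraicIndependent
    (algebraicIndependent_pair_of_transcendental hg hr)
  exact hmax _ hvg (hv.mem_closure_eval_mkDerivation_eq_zero hvr hdist hra ha)

theorem isAlgebraic_mk_C {k σ : Type*} [CommRing k] {J : Ideal (MvPolynomial σ k)} [J.IsPrime]
    (S : Subalgebra k (MvPolynomial σ k ⧸ J)) (c : k) :
    IsAlgebraic S (Ideal.Quotient.mk J (C c)) :=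
  isAlgebraic_algebraMap (algebraMap k S c)

theorem dist_sq_le_sum_sub_sq {ι : Type*} [Fintype ι] (x a : ι → ℝ) :
    dist x a ^ 2 ≤ ∑ j, (x j - a j) ^ 2 := by
  have hsum : 0 ≤ ∑ j, (x j - a j) ^ 2 := Finset.sum_nonneg fun j _ => sq_nonneg _
  rw [← Real.le_sqrt dist_nonneg hsum, dist_pi_le_iff (Real.sqrt_nonneg _)]
  intro i
  rw [Real.dist_eq]
  exact Real.abs_le_sqrt
    (Finset.single_le_sum (f := fun j => (x j - a j) ^ 2) (fun j _ => sq_nonneg _)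
      (Finset.mem_univ i))

-- Both `r = ∑ j, (X j - a j) ^ 2` and `r + (X i - a i) ^ 2` dominate the squared distance to `a`,
-- so their difference `(X i - a i) ^ 2` is algebraic over `ℝ[g]`.
theorem isAlgebraic_adjoin_of_maximal [I.IsPrime] {g : MvPolynomial (Fin n) ℝ}
    (hg : Transcendental ℝ (Ideal.Quotient.mk I g))
    (ha : a ∈ closure (realPoints I ∩ {x | 0 < eval x g}))
    (hmax : ∀ h ∉ I, a ∉ closure (realPoints I ∩ {x | 0 < eval x g} ∩ {x | eval x h = 0})) :
    Algebra.IsAlgebraic (Algebra.adjoin ℝ {Ideal.Quotient.mk I g})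
      (MvPolynomial (Fin n) ℝ ⧸ I) := by
  set S := Algebra.adjoin ℝ {Ideal.Quotient.mk I g}
  let r : MvPolynomial (Fin n) ℝ := ∑ j, (X j - C (a j)) ^ 2
  have hdist (x : Fin n → ℝ) : dist x a ^ 2 ≤ eval x r := by
    simpa [r] using dist_sq_le_sum_sub_sq x a
  have hX (i : Fin n) : IsAlgebraic S (Ideal.Quotient.mk I (X i)) := by
    have hr := isAlgebraic_mk_of_dist_sq_le hg ha hmax hdist (by simp [r])
    have hr' := isAlgebraic_mk_of_dist_sq_le (r := r + (X i - C (a i)) ^ 2) hg ha hmax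
      (fun x => (hdist x).trans (by simpa using sq_nonneg (x i - a i))) (by simp [r])
    have hsub := hr'.sub hr
    rw [← map_sub, add_sub_cancel_left, map_pow] at hsub
    simpa only [map_sub, sub_add_cancel] using
      (IsAlgebraic.of_pow two_pos hsub).add (isAlgebraic_mk_C S (a i))
  refine ⟨fun y => ?_⟩
  obtain ⟨P, rfl⟩ := Ideal.Quotient.mk_surjective y
  induction P using MvPolynomial.induction_on with
  | C c => exact isAlgebraic_mk_C S c
  | add p q hp hq => exact map_add (Ideal.Quotient.mk I) p q ▸ hp.add hq
  | mul_X p i hp => exact map_mul (Ideal.Quotient.mk I) p (X i) ▸ hp.mul (hX i)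

theorem exists_curve_mem_closure {g : MvPolynomial (Fin n) ℝ} (hga : eval a g ≤ 0)
    (ha : a ∈ closure {x | 0 < eval x g}) :
    ∃ I : Ideal (MvPolynomial (Fin n) ℝ), I.IsPrime ∧
      ringKrullDim (MvPolynomial (Fin n) ℝ ⧸ I) = 1 ∧ a ∈ realPoints I ∧
      a ∈ closure (realPoints I ∩ {x | 0 < eval x g}) := by
  obtain ⟨I, hI, haI, hmax⟩ := exists_isPrime_mem_closure_maximal ha
  have hg := transcendental_mk_of_mem_closure hga haI
  exact ⟨I, hI,
    ringKrullDim_eq_one_of_isAlgebraic_adjoin hg (isAlgebraic_adjoin_of_maximal hg haI hmax),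
    (isClosed_realPoints I).closure_subset_iff.2 Set.inter_subset_left haI, haI⟩

end CurveSelection

section Continuity

variable {n : ℕ} {U : Set (Fin n → ℝ)} {f : (Fin n → ℝ) → ℝ} {p q : MvPolynomial (Fin n) ℝ}

theorem exists_mvPolynomial_eval_pos_iff (hpq : ∀ x ∈ U, eval x q * f x = eval x p) (c : ℝ)
    {e : ℝ} (he : 0 ≤ e) :
    ∃ g : MvPolynomial (Fin n) ℝ,
      ∀ x ∈ U, 0 < eval x g ↔ eval x q ≠ 0 ∧ e < dist (f x) c := by
  refine ⟨(p - C c * q) ^ 2 - C (e ^ 2) * q ^ 2, fun x hx => ?_⟩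
  have heval : eval x ((p - C c * q) ^ 2 - C (e ^ 2) * q ^ 2) =
      eval x q ^ 2 * ((f x - c) ^ 2 - e ^ 2) := by
    simp only [map_sub, map_pow, map_mul, eval_C, ← hpq x hx]
    ring
  rw [heval, Real.dist_eq, ← abs_of_nonneg he, ← sq_lt_sq, abs_of_nonneg he]
  rcases eq_or_ne (eval x q) 0 with hq | hq
  · simp [hq]
  · rw [mul_pos_iff_of_pos_left (sq_pos_of_ne_zero hq), sub_pos, and_iff_right hq]

theorem frequently_eval_ne_zero_and_mem_of_isOpen (hU : IsOpen U)
    (hf : ∀ x ∈ U, LineContinuousAt f x) (hq : q ≠ 0) {a : Fin n → ℝ} (ha : a ∈ U) {V : Set ℝ}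
    (hV : IsOpen V) (hfreq : ∃ᶠ x in 𝓝 a, f x ∈ V) :
    ∃ᶠ x in 𝓝 a, eval x q ≠ 0 ∧ f x ∈ V := by
  rw [← frequently_frequently_nhds]
  exact (hfreq.and_eventually (hU.mem_nhds ha)).mono fun x hx =>
    (hf x hx.2).frequently_eval_ne_zero_and_mem hq (hV.mem_nhds hx.1)

theorem ArcRational.eventually_dist_le (hf : ArcRational U f)
    (hpq : ∀ x ∈ U, eval x q * f x = eval x p) {a : Fin n → ℝ} (ha : a ∈ U) {e : ℝ} (he : 0 < e) :
    ∀ᶠ x in 𝓝 a, x ∈ U → eval x q ≠ 0 → dist (f x) (f a) ≤ e := by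
  obtain ⟨g, hg⟩ := exists_mvPolynomial_eval_pos_iff hpq (f a) he.le
  by_contra hfar
  have hcl : a ∈ closure {x | 0 < eval x g} := by
    refine mem_closure_iff_frequently.2 ((not_eventually.1 hfar).mono fun x hx => ?_)
    push Not at hx
    exact (hg x hx.1).2 hx.2
  have hga : eval a g ≤ 0 := not_lt.1 fun h => he.not_gt (by simpa using ((hg a ha).1 h).2)
  obtain ⟨I, hI, hdim, haI, haclI⟩ := exists_curve_mem_closure hga hcl
  obtain ⟨W, hW, haW, hWU, hcont, -⟩ := hf a ha I hI hdim haI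
  have hnear : ∀ᶠ x in 𝓝 a, x ∈ W ∩ realPoints I → dist (f x) (f a) < e :=
    eventually_nhdsWithin_iff.1 ((hcont a ⟨haW, haI⟩).eventually (Metric.ball_mem_nhds _ he))
  obtain ⟨x, ⟨hxI, hgx⟩, hxW, hx⟩ := ((mem_closure_iff_frequently.1 haclI).and_eventually
    ((hW.eventually_mem haW).and hnear)).exists
  exact (hx ⟨hxW, hxI⟩).not_gt ((hg x (hWU hxW)).1 hgx).2

theorem ArcRational.continuousOn (hU : IsOpen U) (hf : ArcRational U f) (hq : q ≠ 0)
    (hpq : ∀ x ∈ U, eval x q * f x = eval x p) : ContinuousOn f U := by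
  refine fun a ha => ContinuousAt.continuousWithinAt (Metric.tendsto_nhds.2 fun ε hε => ?_)
  by_contra hfar
  have hfreq : ∃ᶠ x in 𝓝 a, f x ∈ {y | ε / 2 < dist y (f a)} := by
    refine (not_eventually.1 hfar).mono fun x hx => ?_
    exact (half_lt_self hε).trans_le (not_lt.1 hx)
  have hfreq' := frequently_eval_ne_zero_and_mem_of_isOpen hU
    (fun x hx => (hf.lineRationalAt hx).lineContinuousAt) hq ha
    (isOpen_lt continuous_const (continuous_id.dist continuous_const)) hfreq
  obtain ⟨x, ⟨hqx, hxfar⟩, hxU, hx⟩ := (hfreq'.and_eventually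
    ((hU.eventually_mem ha).and (hf.eventually_dist_le hpq ha (half_pos hε)))).exists
  exact (hx hxU hqx).not_gt hxfar

end Continuity

theorem arcRational_is_continuous_hereditarily_rational_general {n : ℕ} {U : Set (Fin n → ℝ)}
    (hU : IsOpen U) (hconn : IsConnected U) {f : (Fin n → ℝ) → ℝ} (hf : ArcRational U f) :
    ContinuousOn f U ∧ ∀ I : Ideal (MvPolynomial (Fin n) ℝ), I.IsPrime →
      ∃ p q : MvPolynomial (Fin n) ℝ, q ∉ I ∧
        ∀ x ∈ U ∩ realPoints I, eval x q ≠ 0 → f x = eval x p / eval x q := by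
  have hline (x) (hx : x ∈ U) : LineRationalAt f x := hf.lineRationalAt hx
  obtain ⟨p, q, hq, hpq⟩ := exists_mvPolynomial_fraction_of_lineRationalAt hU hconn hline
  exact ⟨hf.continuousOn hU hq hpq, fun I _ =>
    exists_fraction_on_realPoints hU (fun x hx => (hline x hx).lineContinuousAt) hq hpq⟩

/-- **Theorem 1.10** for open subsets of `ℝⁿ`. An arc-rational function on a nonempty
connected open set `U ⊆ ℝⁿ` is continuous, rational, and hereditarily rational along
every irreducible real algebraic curve. -/
theorem arcRational_is_continuous_hereditarily_rational
    (n : ℕ) (U : Set (Fin n → ℝ)) (hU : IsOpen U) (hne : U.Nonempty)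
    (hconn : IsConnected U) (f : (Fin n → ℝ) → ℝ) (hf : ArcRational U f) :
    ContinuousOn f U ∧
    (∃ p q : MvPolynomial (Fin n) ℝ, q ≠ 0 ∧
      ∀ x ∈ U, eval x q ≠ 0 → f x = eval x p / eval x q) ∧
    (∀ I : Ideal (MvPolynomial (Fin n) ℝ), I.IsPrime →
      ringKrullDim (MvPolynomial (Fin n) ℝ ⧸ I) = 1 →
      ∃ p' q' : MvPolynomial (Fin n) ℝ, q' ∉ I ∧
        ∀ x ∈ U ∩ realPoints I, eval x q' ≠ 0 → f x = eval x p' / eval x q') := by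
  obtain ⟨hcont, hrat⟩ := arcRational_is_continuous_hereditarily_rational_general hU hconn hf
  exact ⟨hcont, by simpa [realPoints_bot] using hrat ⊥ Ideal.isPrime_bot, fun I hI _ => hrat I hI⟩
end
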